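/- Let 1 < p < ∞ and let f ∈ L^p([0,1]²) satisfy I_p(f) < ∞ and J_p(f) < ∞. Then there exists a continuous function f̄ in the mixed norm class V_p[V_p] such that f = f̄ almost everywhere, and there is an absolute constant A > 0 (independent of p and f) with W_p(f̄) ≤ A[ω(f;1,1)_p + (1/(p·p'))·K_p(f) + (1/(p·p'))²·I_p(f)]. -/

import Mathlib

open MeasureTheory Filter Set
open scoped ENNReal

noncomputable section

/-- A function of two real variables that is 1-periodic in each variable. -/
def BiPeriodic (f : ℝ → ℝ → ℝ) : Prop :=
  (∀ x y, f (x + 1) y = f x y) ∧ (∀ x y, f x (y + 1) = f x y)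

/-- A 1-periodic function of one real variable. -/
def Periodic1 (g : ℝ → ℝ) : Prop := ∀ x, g (x + 1) = g x

/-- The `L^p` norm of a function over `[0,1]^2` (as a value in `[0,∞]`). -/
noncomputable def lpNorm2 (p : ℝ) (f : ℝ → ℝ → ℝ) : ℝ≥0∞ :=
  (∫⁻ x in Set.Icc (0:ℝ) 1, ∫⁻ y in Set.Icc (0:ℝ) 1,
      ENNReal.ofReal (|f x y| ^ p)) ^ (1 / p)

/-- The `L^p` norm of a function over `[0,1]` (as a value in `[0,∞]`). -/
noncomputable def lpNorm1 (p : ℝ) (g : ℝ → ℝ) : ℝ≥0∞ :=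
  (∫⁻ x in Set.Icc (0:ℝ) 1, ENNReal.ofReal (|g x| ^ p)) ^ (1 / p)

/-- Membership in `L^p([0,1]^2)`: measurable, 1-periodic in each variable,
finite `L^p` norm. -/
def MemLp2 (p : ℝ) (f : ℝ → ℝ → ℝ) : Prop :=
  Measurable (Function.uncurry f) ∧ BiPeriodic f ∧ lpNorm2 p f < ⊤

/-- Membership in `L^p([0,1])` for 1-periodic functions of one variable. -/
def MemLp1 (p : ℝ) (g : ℝ → ℝ) : Prop :=
  Measurable g ∧ Periodic1 g ∧ lpNorm1 p g < ⊤

/-- The (total) `L^p` modulus of continuity `ω(f;δ)_p` of a bivariate function. -/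
noncomputable def modulus2 (p : ℝ) (f : ℝ → ℝ → ℝ) (δ : ℝ) : ℝ≥0∞ :=
  ⨆ (h : ℝ × ℝ) (_ : Real.sqrt (h.1 ^ 2 + h.2 ^ 2) ≤ δ),
    lpNorm2 p (fun x y => f (x + h.1) (y + h.2) - f x y)

/-- The `L^p` modulus of continuity `ω(g;δ)_p` of a univariate function. -/
noncomputable def modulus1 (p : ℝ) (g : ℝ → ℝ) (δ : ℝ) : ℝ≥0∞ :=
  ⨆ (h : ℝ) (_ : h ∈ Set.Icc 0 δ), lpNorm1 p (fun x => g (x + h) - g x)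

/-- The mixed `L^p` modulus of continuity `ω(f;u,v)_p`. -/
noncomputable def mixedModulus (p : ℝ) (f : ℝ → ℝ → ℝ) (u v : ℝ) : ℝ≥0∞ :=
  ⨆ (s : ℝ) (_ : s ∈ Set.Icc 0 u) (t : ℝ) (_ : t ∈ Set.Icc 0 v),
    lpNorm2 p (fun x y => f (x + s) (y + t) - f (x + s) y - f x (y + t) + f x y)

/-- `J_p(f) = ∫₀¹ t^{-1/p} ω(f;t)_p dt/t`. -/
noncomputable def Jp (p : ℝ) (f : ℝ → ℝ → ℝ) : ℝ≥0∞ :=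
  ∫⁻ t in Set.Ioc (0:ℝ) 1, ENNReal.ofReal (t ^ (-(1/p)) / t) * modulus2 p f t

/-- `K_p(f) = ∫₀¹ t^{-1/p} [ω(f;t,1)_p + ω(f;1,t)_p] dt/t`. -/
noncomputable def Kp (p : ℝ) (f : ℝ → ℝ → ℝ) : ℝ≥0∞ :=
  ∫⁻ t in Set.Ioc (0:ℝ) 1,
    ENNReal.ofReal (t ^ (-(1/p)) / t) * (mixedModulus p f t 1 + mixedModulus p f 1 t)

/-- `I_p(f) = ∫₀¹∫₀¹ (uv)^{-1/p} ω(f;u,v)_p (du/u)(dv/v)`. -/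
noncomputable def Ip (p : ℝ) (f : ℝ → ℝ → ℝ) : ℝ≥0∞ :=
  ∫⁻ u in Set.Ioc (0:ℝ) 1, ∫⁻ v in Set.Ioc (0:ℝ) 1,
    ENNReal.ofReal ((u * v) ^ (-(1/p)) / (u * v)) * mixedModulus p f u v

/-- The essential supremum norm of `f` over `[0,1]^2`. -/
noncomputable def supNorm2 (f : ℝ → ℝ → ℝ) : ℝ≥0∞ :=
  essSup (fun z : ℝ × ℝ => ENNReal.ofReal |f z.1 z.2|)
    (volume.restrict ((Set.Icc (0:ℝ) 1) ×ˢ (Set.Icc (0:ℝ) 1)))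

/-- The Wiener `p`-variation of a 1-periodic function `g`, as a value in `[0,∞]`:
the supremum over partitions `x₀ < x₁ < ... < xₙ = x₀ + 1` of
`(∑ |g(x_{k+1}) - g(x_k)|^p)^{1/p}`. -/
noncomputable def vp (p : ℝ) (g : ℝ → ℝ) : ℝ≥0∞ :=
  ⨆ (n : ℕ) (x : ℕ → ℝ) (_ : ∀ i < n, x i < x (i + 1)) (_ : x n = x 0 + 1),
    ENNReal.ofReal ((∑ k ∈ Finset.range n, |g (x (k + 1)) - g (x k)| ^ p) ^ (1 / p))

/-- The Hardy–Vitali type total `p`-variation of a bivariate function,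
as a value in `[0,∞]`: the supremum over nets of
`(∑∑ |Δf(x_i,y_j)|^p)^{1/p}`. -/
noncomputable def vp2 (p : ℝ) (f : ℝ → ℝ → ℝ) : ℝ≥0∞ :=
  ⨆ (m : ℕ) (n : ℕ) (x : ℕ → ℝ) (y : ℕ → ℝ)
    (_ : ∀ i < m, x i < x (i + 1)) (_ : x m = x 0 + 1)
    (_ : ∀ j < n, y j < y (j + 1)) (_ : y n = y 0 + 1),
    ENNReal.ofReal ((∑ i ∈ Finset.range m, ∑ j ∈ Finset.range n,
      |f (x (i + 1)) (y (j + 1)) - f (x (i + 1)) (y j)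
        - f (x i) (y (j + 1)) + f (x i) (y j)| ^ p) ^ (1 / p))

/-- Membership in the Hardy class `H_p^{(2)}`: finite Vitali `p`-variation and
all linear sections of bounded `p`-variation. -/
def MemHp2 (p : ℝ) (f : ℝ → ℝ → ℝ) : Prop :=
  vp2 p f < ⊤ ∧ (∀ x, vp p (fun y => f x y) < ⊤) ∧ (∀ y, vp p (fun x => f x y) < ⊤)

/-- Membership in the mixed norm class `V_p[V_p]`: all sections have bounded
`p`-variation and the functions `x ↦ v_p(f_x)`, `y ↦ v_p(f_y)` are themselves
of bounded `p`-variation. -/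
def MemVpVp (p : ℝ) (f : ℝ → ℝ → ℝ) : Prop :=
  (∀ x, vp p (fun y => f x y) < ⊤) ∧ (∀ y, vp p (fun x => f x y) < ⊤) ∧
  vp p (fun x => (vp p (fun y => f x y)).toReal) < ⊤ ∧
  vp p (fun y => (vp p (fun x => f x y)).toReal) < ⊤

/-- `W_p(f) = v_p(φ_p[f]) + v_p(ψ_p[f])`, where `φ_p[f](x) = v_p(f_x)` and
`ψ_p[f](y) = v_p(f_y)`. -/
noncomputable def Wp (p : ℝ) (f : ℝ → ℝ → ℝ) : ℝ≥0∞ :=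
  vp p (fun x => (vp p (fun y => f x y)).toReal)
    + vp p (fun y => (vp p (fun x => f x y)).toReal)

/-- Membership in `L^p_0([0,1]^2)`: membership in `L^p([0,1]^2)` together with
vanishing of the linear mean values `∫₀¹ f(x,t) dt` and `∫₀¹ f(t,y) dt` for a.e.
`x` resp. `y`. -/
def MemLp20 (p : ℝ) (f : ℝ → ℝ → ℝ) : Prop :=
  MemLp2 p f ∧ (∀ᵐ x : ℝ ∂volume, ∫ t in (0:ℝ)..1, f x t = 0) ∧
    (∀ᵐ y : ℝ ∂volume, ∫ t in (0:ℝ)..1, f t y = 0)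

/-- `T` is a trigonometric polynomial of degree `(n,m)` in two variables. -/
def IsTrigPoly2 (n m : ℕ) (T : ℝ → ℝ → ℝ) : Prop :=
  ∃ a b c d : ℕ → ℕ → ℝ, ∀ x y : ℝ,
    T x y = ∑ j ∈ Finset.range (n + 1), ∑ k ∈ Finset.range (m + 1),
      (a j k * Real.cos (2 * Real.pi * j * x) * Real.cos (2 * Real.pi * k * y)
        + b j k * Real.cos (2 * Real.pi * j * x) * Real.sin (2 * Real.pi * k * y)
        + c j k * Real.sin (2 * Real.pi * j * x) * Real.cos (2 * Real.pi * k * y)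
        + d j k * Real.sin (2 * Real.pi * j * x) * Real.sin (2 * Real.pi * k * y))

end


lemma aux_hasDeriv (p : ℝ) (hp : 1 < p) (u : ℝ) :
    HasDerivAt (fun u : ℝ => u * |u| ^ (p - 1)) (p * |u| ^ (p - 1)) u := by
  rcases lt_trichotomy u 0 with h | h | h
  · have h1 : HasDerivAt (fun u : ℝ => -((-u) ^ p)) (p * (-u) ^ (p-1)) u := by
      have := ((hasDerivAt_neg u).rpow_const (p := p) (Or.inl (by simpa using h.ne))).neg
      refine this.congr_deriv ?_; ring
    rw [abs_of_neg h]
    refine h1.congr_of_eventuallyEq ?_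
    filter_upwards [eventually_lt_nhds h] with v hv
    rw [abs_of_neg hv]
    have : (-v) ^ p = (-v) ^ (p-1) * (-v) := by
      rw [← Real.rpow_add_one (by linarith)]; ring_nf
    rw [this]; ring
  · subst h
    have h0 : p * |(0:ℝ)| ^ (p-1) = 0 := by
      rw [abs_zero, Real.zero_rpow (by linarith)]; ring
    rw [h0, hasDerivAt_iff_tendsto_slope]
    have : Tendsto (fun u : ℝ => |u| ^ (p-1)) (nhdsWithin 0 {0}ᶜ) (nhds 0) := by
      have hc : Continuous (fun u : ℝ => |u| ^ (p-1)) :=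
        continuous_abs.rpow_const (fun _ => Or.inr (by linarith))
      have := hc.tendsto 0
      simp only [abs_zero] at this
      rw [Real.zero_rpow (by linarith)] at this
      exact this.mono_left nhdsWithin_le_nhds
    refine this.congr' ?_
    filter_upwards [self_mem_nhdsWithin] with v hv
    simp only [slope, sub_zero, zero_mul, vsub_eq_sub, smul_eq_mul]
    field_simp [show v ≠ 0 from hv]
  · have h1 : HasDerivAt (fun u : ℝ => u ^ p) (p * u ^ (p-1)) u := by
      have := (hasDerivAt_id u).rpow_const (p := p) (Or.inl h.ne')
      simpa using this
    rw [abs_of_pos h]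
    refine h1.congr_of_eventuallyEq ?_
    filter_upwards [eventually_gt_nhds h] with v hv
    rw [abs_of_pos hv]
    have : v ^ p = v ^ (p-1) * v := by
      rw [← Real.rpow_add_one (by linarith)]; ring_nf
    rw [this]; ring

lemma aux_superadd (p : ℝ) (hp : 1 < p) (a b : ℝ) (ha : 0 ≤ a) (hab : a ≤ b) :
    (b - a) ^ p ≤ b ^ p - a ^ p := by
  have := Real.add_rpow_le_rpow_add (show 0 ≤ b - a by linarith) ha hp.le
  rw [sub_add_cancel] at this; linarith

lemma aux_self (p : ℝ) (hp : 1 < p) (a : ℝ) (ha : 0 ≤ a) : a * a ^ (p-1) = a ^ p := by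
  rw [mul_comm, ← Real.rpow_add_one' ha (by linarith)]; ring_nf

lemma aux_pow_le (p : ℝ) (hp : 1 < p) (a b : ℝ) (hab : a ≤ b) :
    (b - a) ^ p ≤ 2 ^ (p - 1) * (b * |b| ^ (p-1) - a * |a| ^ (p-1)) := by
  have h2 : (1:ℝ) ≤ 2 ^ (p-1) := Real.one_le_rpow (by norm_num) (by linarith)
  rcases le_total 0 a with ha | ha
  · have hb := ha.trans hab
    rw [abs_of_nonneg ha, abs_of_nonneg hb, aux_self p hp a ha, aux_self p hp b hb]
    have h1 := aux_superadd p hp a b ha hab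
    have : 0 ≤ (b-a)^p := Real.rpow_nonneg (by linarith) _
    nlinarith
  · rcases le_total 0 b with hb | hb
    · rw [abs_of_nonpos ha, abs_of_nonneg hb, aux_self p hp b hb]
      have h3 : -(a * (-a)^(p-1)) = (-a)^p := by
        rw [← aux_self p hp (-a) (by linarith)]; ring
      have : (b + -a)^p ≤ 2^(p-1) * (b^p + (-a)^p) := by
        exact_mod_cast NNReal.rpow_add_le_mul_rpow_add_rpow ⟨b, hb⟩ ⟨-a, by linarith⟩ hp.le
      calc (b-a)^p = (b + -a)^p := by ring_nf
        _ ≤ _ := this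
        _ = _ := by rw [← h3]; ring
    · rw [abs_of_nonpos ha, abs_of_nonpos hb]
      have h1 := aux_superadd p hp (-b) (-a) (by linarith) (by linarith)
      have h3 : -(a * (-a)^(p-1)) = (-a)^p := by
        rw [← aux_self p hp (-a) (by linarith)]; ring
      have h4 : -(b * (-b)^(p-1)) = (-b)^p := by
        rw [← aux_self p hp (-b) (by linarith)]; ring
      rw [show -a - -b = b - a by ring] at h1
      have : 0 ≤ (b-a)^p := Real.rpow_nonneg (by linarith) _
      nlinarith

lemma key_one (p : ℝ) (hp : 1 < p) (H H' : ℝ → ℝ) (hd : ∀ x, HasDerivAt H (H' x) x)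
    (hc : Continuous H') (a b : ℝ) (hab : a ≤ b) :
    ‖H b - H a‖ₑ ^ p ≤ ENNReal.ofReal (2 ^ (p-1) * p) *
      ∫⁻ t in Ioc a b, ‖H t‖ₑ ^ (p-1) * ‖H' t‖ₑ := by
  have hH : Continuous H := continuous_iff_continuousAt.2 fun x => (hd x).continuousAt
  have hpc : Continuous fun t => p * |H t| ^ (p-1) * H' t := by
    refine (continuous_const.mul (hH.abs.rpow_const (fun _ => Or.inr (by linarith)))).mul hc
  have hftc : ∫ t in a..b, p * |H t| ^ (p-1) * H' t
      = H b * |H b| ^ (p-1) - H a * |H a| ^ (p-1) := by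
    refine intervalIntegral.integral_eq_sub_of_hasDerivAt
      (f := fun t => H t * |H t| ^ (p-1)) ?_ (hpc.intervalIntegrable _ _)
    intro x _
    exact (aux_hasDeriv p hp (H x)).comp x (hd x)
  have hle : |H b - H a| ^ p ≤ 2 ^ (p-1) * |H b * |H b| ^ (p-1) - H a * |H a| ^ (p-1)| := by
    rcases le_total (H a) (H b) with h | h
    · rw [abs_of_nonneg (sub_nonneg.2 h)]
      refine (aux_pow_le p hp _ _ h).trans ?_
      gcongr; exact le_abs_self _
    · rw [abs_sub_comm, abs_sub_comm (H b * _), abs_of_nonneg (sub_nonneg.2 h)]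
      refine (aux_pow_le p hp _ _ h).trans ?_
      gcongr; exact le_abs_self _
  rw [← hftc] at hle
  have hp0 : 0 ≤ p := by linarith
  have e1 : ‖H b - H a‖ₑ ^ p = ENNReal.ofReal (|H b - H a| ^ p) := by
    rw [← Real.norm_eq_abs, ← ENNReal.ofReal_rpow_of_nonneg (norm_nonneg _) hp0, ofReal_norm]
  rw [e1]
  refine (ENNReal.ofReal_le_ofReal hle).trans ?_
  rw [ENNReal.ofReal_mul (by positivity), ENNReal.ofReal_mul (by positivity), mul_assoc]
  gcongr
  rw [← Real.norm_eq_abs, ofReal_norm, intervalIntegral.integral_of_le hab]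
  refine (enorm_integral_le_lintegral_enorm _).trans ?_
  rw [← lintegral_const_mul' _ _ ENNReal.ofReal_ne_top]
  apply le_of_eq
  congr 1 with t
  rw [enorm_mul, enorm_mul, mul_assoc]
  congr 1
  · rw [Real.enorm_eq_ofReal hp0]
  · congr 1
    rw [Real.enorm_eq_ofReal (by positivity), ← Real.norm_eq_abs,
      ← ENNReal.ofReal_rpow_of_nonneg (norm_nonneg _) (by linarith), ofReal_norm]

lemma key_sum (p : ℝ) (hp : 1 < p) (H H' : ℝ → ℝ) (hd : ∀ x, HasDerivAt H (H' x) x)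
    (hc : Continuous H') (n : ℕ) (x : ℕ → ℝ) (hx : ∀ i < n, x i ≤ x (i+1)) :
    x 0 ≤ x n ∧ ∑ j ∈ Finset.range n, ‖H (x (j+1)) - H (x j)‖ₑ ^ p ≤
      ENNReal.ofReal (2 ^ (p-1) * p) *
      ∫⁻ t in Ioc (x 0) (x n), ‖H t‖ₑ ^ (p-1) * ‖H' t‖ₑ := by
  induction n with
  | zero => simp
  | succ n ih =>
    obtain ⟨h0, h1⟩ := ih (fun i hi => hx i (by omega))
    have h2 := hx n (by omega)
    refine ⟨h0.trans h2, ?_⟩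
    rw [Finset.sum_range_succ, ← Ioc_union_Ioc_eq_Ioc h0 h2,
      lintegral_union measurableSet_Ioc (Ioc_disjoint_Ioc_of_le le_rfl), mul_add]
    exact add_le_add h1 (key_one p hp H H' hd hc _ _ h2)

lemma lint_per (φ : ℝ → ℝ≥0∞) (h : ∀ x, φ (x+1) = φ x) (a : ℝ) :
    ∫⁻ x in Ioc a (a+1), φ x = ∫⁻ x in Ioc (0:ℝ) 1, φ x := by
  have hf : Function.Periodic φ 1 := h
  have h1 := isAddFundamentalDomain_Ioc (T := (1:ℝ)) zero_lt_one a
  have h2 := isAddFundamentalDomain_Ioc (T := (1:ℝ)) zero_lt_one 0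
  have := h1.setLIntegral_eq h2 φ hf.map_vadd_zmultiples
  simpa using this

lemma lint_shift (φ : ℝ → ℝ≥0∞) (h : ∀ x, φ (x+1) = φ x) (a : ℝ) :
    ∫⁻ x in Ioc (0:ℝ) 1, φ (x + a) = ∫⁻ x in Ioc (0:ℝ) 1, φ x := by
  rw [← lint_per φ h a]
  have := (measurePreserving_add_right volume a).setLIntegral_comp_preimage_emb
    (measurableEmbedding_addRight a) φ (Ioc a (a+1))
  rw [← this]
  congr 2
  ext x; simp [add_comm]


lemma eN {Z : Type*} [MeasurableSpace Z] (ν : Measure Z) (p : ℝ) (hp : 1 < p) (F : Z → ℝ) :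
    eLpNorm F (ENNReal.ofReal p) ν = (∫⁻ z, ‖F z‖ₑ ^ p ∂ν) ^ (1/p) := by
  rw [eLpNorm_eq_lintegral_rpow_enorm_toReal (by simpa using by linarith) ENNReal.ofReal_ne_top,
    ENNReal.toReal_ofReal (by linarith)]

lemma eN_pow {Z : Type*} [MeasurableSpace Z] (ν : Measure Z) (p : ℝ) (hp : 1 < p) (F : Z → ℝ) :
    eLpNorm F (ENNReal.ofReal p) ν ^ p = (∫⁻ z, ‖F z‖ₑ ^ p ∂ν) := by
  rw [eN ν p hp, ← ENNReal.rpow_mul, one_div_mul_cancel (by linarith), ENNReal.rpow_one]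

lemma one_le_q {p : ℝ} (hp : 1 < p) : 1 ≤ ENNReal.ofReal p := by
  rw [← ENNReal.ofReal_one]; exact ENNReal.ofReal_le_ofReal hp.le

lemma jensen {H : Type*} [MeasurableSpace H] (ρ : Measure H) [IsProbabilityMeasure ρ]
    (p : ℝ) (hp : 1 < p) (φ : H → ℝ≥0∞) (hφ : AEMeasurable φ ρ) :
    (∫⁻ h, φ h ∂ρ) ^ p ≤ ∫⁻ h, φ h ^ p ∂ρ := by
  have h := ENNReal.lintegral_mul_norm_pow_le (μ := ρ) (f := fun h => φ h ^ p) (g := fun _ => 1)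
    (hφ.pow_const p) aemeasurable_const (p := 1/p) (q := 1 - 1/p) (by positivity)
    (by rw [sub_nonneg, div_le_one (by linarith)]; exact hp.le) (by ring)
  simp only [ENNReal.one_rpow, mul_one, lintegral_const, measure_univ] at h
  have e : ∀ h, (φ h ^ p) ^ (1/p) = φ h := fun h => by
    rw [← ENNReal.rpow_mul, mul_one_div_cancel (by linarith), ENNReal.rpow_one]
  simp only [e] at h
  calc _ ≤ ((∫⁻ h, φ h ^ p ∂ρ) ^ (1/p)) ^ p := ENNReal.rpow_le_rpow h (by linarith)
    _ = _ := by rw [← ENNReal.rpow_mul, one_div_mul_cancel (by linarith), ENNReal.rpow_one]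

lemma mink {Z H : Type*} [MeasurableSpace Z] [MeasurableSpace H] (ν : Measure Z) [SFinite ν]
    (ρ : Measure H) [IsProbabilityMeasure ρ] (p : ℝ) (hp : 1 < p) (F : Z → ℝ) (D : Z → H → ℝ)
    (hD : Measurable (Function.uncurry D)) (C : ℝ≥0∞)
    (h1 : ∀ z, ‖F z‖ₑ ≤ ∫⁻ h, ‖D z h‖ₑ ∂ρ)
    (h2 : ∀ᵐ h ∂ρ, eLpNorm (fun z => D z h) (ENNReal.ofReal p) ν ≤ C) :
    eLpNorm F (ENNReal.ofReal p) ν ≤ C := by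
  have hp0 : 0 < p := by linarith
  rw [← ENNReal.rpow_le_rpow_iff hp0, eN_pow ν p hp]
  calc ∫⁻ z, ‖F z‖ₑ ^ p ∂ν ≤ ∫⁻ z, (∫⁻ h, ‖D z h‖ₑ ^ p ∂ρ) ∂ν := by
        refine lintegral_mono fun z => ?_
        refine (ENNReal.rpow_le_rpow (h1 z) hp0.le).trans (jensen ρ p hp _ ?_)
        exact (hD.comp measurable_prodMk_left).enorm.aemeasurable
    _ = ∫⁻ h, ∫⁻ z, ‖D z h‖ₑ ^ p ∂ν ∂ρ := by
        refine lintegral_lintegral_swap ?_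
        exact (hD.enorm.pow_const p).aemeasurable
    _ ≤ ∫⁻ h, C ^ p ∂ρ := by
        refine lintegral_mono_ae ?_
        filter_upwards [h2] with h hh
        rw [← eN_pow ν p hp]
        exact ENNReal.rpow_le_rpow hh hp0.le
    _ = C ^ p := by simp


noncomputable section

instance probIoc : IsProbabilityMeasure (volume.restrict (Ioc (0:ℝ) 1)) := ⟨by simp⟩

/-- cell norm -/
def MM {α : Type*} [MeasurableSpace α] (μ : Measure α) (p : ℝ) (G : α → ℝ → ℝ) : ℝ≥0∞ :=
  eLpNorm (Function.uncurry G) (ENNReal.ofReal p) (μ.prod (volume.restrict (Ioc (0:ℝ) 1)))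

/-- modulus -/
def om {α : Type*} [MeasurableSpace α] (μ : Measure α) (p : ℝ) (G : α → ℝ → ℝ) (t : ℝ) : ℝ≥0∞ :=
  ⨆ (k : ℝ) (_ : k ∈ Icc 0 t), MM μ p (fun a x => G a (x + k) - G a x)

/-- Steklov mean -/
def stek {α : Type*} (h : ℝ) (G : α → ℝ → ℝ) (a : α) (x : ℝ) : ℝ :=
  ∫ u in Ioc (0:ℝ) 1, G a (x + h * u)

/-- variation sum norm -/
def NN {α : Type*} [MeasurableSpace α] (μ : Measure α) (p : ℝ) (n : ℕ) (x : α → ℕ → ℝ)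
    (G : α → ℝ → ℝ) : ℝ≥0∞ :=
  eLpNorm (fun z : α × Fin n => G z.1 (x z.1 (z.2 + 1)) - G z.1 (x z.1 z.2))
    (ENNReal.ofReal p) (μ.prod Measure.count)

/-- nice families -/
structure Nice {α : Type*} [MeasurableSpace α] (G : α → ℝ → ℝ) : Prop where
  meas : Measurable (Function.uncurry G)
  cont : ∀ a, Continuous (G a)
  per : ∀ a x, G a (x + 1) = G a x

variable {α : Type*} [MeasurableSpace α] {μ : Measure α} [SFinite μ] {p : ℝ} {G F : α → ℝ → ℝ}

lemma MM_add (hp : 1 < p) (hG : Measurable (Function.uncurry G))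
    (hF : Measurable (Function.uncurry F)) :
    MM μ p (fun a x => G a x + F a x) ≤ MM μ p G + MM μ p F :=
  eLpNorm_add_le hG.aestronglyMeasurable hF.aestronglyMeasurable (one_le_q hp)

lemma MM_sub (hp : 1 < p) (hG : Measurable (Function.uncurry G))
    (hF : Measurable (Function.uncurry F)) :
    MM μ p (fun a x => G a x - F a x) ≤ MM μ p G + MM μ p F :=
  eLpNorm_sub_le hG.aestronglyMeasurable hF.aestronglyMeasurable (one_le_q hp)

lemma MM_pow (hp : 1 < p) (hG : Measurable (Function.uncurry G)) :
    MM μ p G ^ p = ∫⁻ a, (∫⁻ x in Ioc (0:ℝ) 1, ‖G a x‖ₑ ^ p) ∂μ := by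
  rw [MM, eN_pow _ _ hp, lintegral_prod _ (hG.enorm.pow_const p).aemeasurable]
  rfl

lemma meas_shift (hG : Measurable (Function.uncurry G)) (k : ℝ) :
    Measurable (Function.uncurry fun a x => G a (x + k)) :=
  hG.comp (measurable_fst.prodMk (measurable_snd.add_const k))

lemma MM_shift (hp : 1 < p) (hG : Measurable (Function.uncurry G))
    (hper : ∀ a x, G a (x + 1) = G a x) (k : ℝ) :
    MM μ p (fun a x => G a (x + k)) = MM μ p G := by
  have hp0 : 0 < p := by linarith
  refine (ENNReal.rpow_left_injective hp0.ne') ?_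
  show _ ^ p = _ ^ p
  rw [MM_pow hp (meas_shift hG k), MM_pow hp hG]
  congr 1 with a
  exact lint_shift (fun x => ‖G a x‖ₑ ^ p) (fun x => by simp [hper]) k

lemma Nice.diff (hG : Nice G) (k : ℝ) : Nice (fun a x => G a (x + k) - G a x) where
  meas := (meas_shift hG.meas k).sub hG.meas
  cont a := ((hG.cont a).comp (continuous_id.add continuous_const)).sub (hG.cont a)
  per a x := by rw [hG.per, add_right_comm, hG.per]

lemma Nice.sub (hG : Nice G) (hF : Nice F) : Nice (fun a x => G a x - F a x) where
  meas := hG.meas.sub hF.meas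
  cont a := (hG.cont a).sub (hF.cont a)
  per a x := by rw [hG.per, hF.per]

lemma le_om {k t : ℝ} (hk : k ∈ Icc 0 t) :
    MM μ p (fun a x => G a (x + k) - G a x) ≤ om μ p G t :=
  le_iSup₂ (f := fun k (_ : k ∈ Icc 0 t) => MM μ p (fun a x => G a (x + k) - G a x)) k hk

lemma om_mono : Monotone (om μ p G) := by
  intro s t h
  exact iSup₂_le fun k hk => le_om ⟨hk.1, hk.2.trans h⟩

lemma om_add (hp : 1 < p) (hG : Nice G) {s t : ℝ} (hs : 0 ≤ s) (ht : 0 ≤ t) :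
    om μ p G (s + t) ≤ om μ p G s + om μ p G t := by
  refine iSup₂_le fun k hk => ?_
  obtain ⟨a, b, ha, hb, rfl⟩ : ∃ a b, a ∈ Icc 0 s ∧ b ∈ Icc 0 t ∧ k = a + b := by
    rcases le_total k s with h | h
    · exact ⟨k, 0, ⟨hk.1, h⟩, ⟨le_rfl, ht⟩, by ring⟩
    · exact ⟨s, k - s, ⟨hs, le_rfl⟩, ⟨by linarith, by linarith [hk.2]⟩, by ring⟩
  have e : (fun c x => G c (x + (a + b)) - G c x) =
      fun c x => (G c (x + b + a) - G c (x + b)) + (G c (x + b) - G c x) := by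
    ext c x; rw [show x + (a+b) = x + b + a by ring]; ring
  rw [e]
  refine (MM_add hp (meas_shift (hG.diff a).meas b) (hG.diff b).meas).trans ?_
  rw [MM_shift hp (hG.diff a).meas (hG.diff a).per b]
  exact add_le_add (le_om ha) (le_om hb)

lemma om_nat (hp : 1 < p) (hG : Nice G) {s : ℝ} (hs : 0 ≤ s) (n : ℕ) :
    om μ p G ((n+1) * s) ≤ (n+1) * om μ p G s := by
  induction n with
  | zero => simp
  | succ n ih =>
    have : ((n + 1 : ℕ) + 1) * s = (n+1) * s + s := by push_cast; ring
    rw [this]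
    refine (om_add hp hG (by positivity) hs).trans ?_
    push_cast
    rw [add_mul ((n:ℝ≥0∞)+1), one_mul]
    gcongr

lemma om_double (hp : 1 < p) (hG : Nice G) {s t : ℝ} (hs : 0 < s) (hst : s ≤ t) :
    om μ p G t ≤ ENNReal.ofReal (2 * (t / s)) * om μ p G s := by
  have h1 : 1 ≤ t / s := (one_le_div hs).2 hst
  have h2 := Nat.lt_floor_add_one (t/s)
  have h3 := Nat.floor_le (show 0 ≤ t/s by linarith)
  calc om μ p G t ≤ om μ p G ((⌊t/s⌋₊ + 1) * s) := by
        refine om_mono ?_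
        rw [← div_le_iff₀ hs]; exact h2.le
    _ ≤ (⌊t/s⌋₊ + 1) * om μ p G s := om_nat hp hG hs.le _
    _ ≤ _ := by
        gcongr
        rw [← ENNReal.ofReal_natCast, ← ENNReal.ofReal_one, ← ENNReal.ofReal_add (by positivity) (by norm_num)]
        exact ENNReal.ofReal_le_ofReal (by linarith)

lemma stek_eq (h : ℝ) (hh : h ≠ 0) (a : α) (x : ℝ) :
    stek h G a x = h⁻¹ * ∫ u in x..(x+h), G a u := by
  rw [stek, ← intervalIntegral.integral_of_le zero_le_one,
    intervalIntegral.integral_comp_add_mul (fun u => G a u) hh x]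
  simp

lemma stek_deriv (hG : Nice G) (h : ℝ) (hh : h ≠ 0) (a : α) (x : ℝ) :
    HasDerivAt (stek h G a) (h⁻¹ * (G a (x+h) - G a x)) x := by
  have hc := hG.cont a
  have e : stek h G a = fun x => h⁻¹ * ((∫ u in (0:ℝ)..(x+h), G a u) - ∫ u in (0:ℝ)..x, G a u) := by
    ext x
    rw [stek_eq h hh, intervalIntegral.integral_interval_sub_left] <;>
      exact hc.intervalIntegrable _ _
  rw [e]
  have h1 : ∀ y, HasDerivAt (fun y => ∫ u in (0:ℝ)..y, G a u) (G a y) y := fun y =>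
    intervalIntegral.integral_hasDerivAt_right (hc.intervalIntegrable _ _)
      hc.aestronglyMeasurable.stronglyMeasurableAtFilter hc.continuousAt
  have h2 := (h1 (x+h)).comp x ((hasDerivAt_id x).add_const h)
  simp only [mul_one] at h2
  exact (h2.sub (h1 x)).const_mul _

lemma stek_nice (hG : Nice G) (h : ℝ) (hh : h ≠ 0) : Nice (stek h G) where
  meas := by
    have : Measurable (fun q : (α × ℝ) × ℝ => G q.1.1 (q.1.2 + h * q.2)) :=
      hG.meas.comp (by fun_prop : Measurable fun q : (α × ℝ) × ℝ => (q.1.1, q.1.2 + h * q.2))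
    exact (this.stronglyMeasurable.integral_prod_right' (ν := volume.restrict (Ioc (0:ℝ) 1))).measurable
  cont a := continuous_iff_continuousAt.2 fun x => (stek_deriv hG h hh a x).continuousAt
  per a x := by
    unfold stek
    congr 1 with u
    rw [add_right_comm, hG.per]

lemma stek_one (hG : Nice G) (a : α) (x y : ℝ) : stek 1 G a x = stek 1 G a y := by
  rw [stek_eq 1 one_ne_zero, stek_eq 1 one_ne_zero]
  have : Function.Periodic (G a) 1 := hG.per a
  rw [this.intervalIntegral_add_eq x y]

lemma MM_stek_sub (hp : 1 < p) (hG : Nice G) (h : ℝ) (hh : 0 < h) :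
    MM μ p (fun a x => stek h G a x - G a x) ≤ om μ p G h := by
  refine mink (μ.prod (volume.restrict (Ioc (0:ℝ) 1))) (volume.restrict (Ioc (0:ℝ) 1)) p hp _
    (fun z u => G z.1 (z.2 + h * u) - G z.1 z.2) ?_ _ ?_ ?_
  · exact (hG.meas.comp (by fun_prop : Measurable fun q : (α × ℝ) × ℝ =>
      (q.1.1, q.1.2 + h * q.2))).sub (hG.meas.comp measurable_fst)
  · rintro ⟨a, x⟩
    have : stek h G a x - G a x = ∫ u in Ioc (0:ℝ) 1, (G a (x + h*u) - G a x) := by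
      rw [integral_sub]
      · simp [stek]
      · have : Continuous fun u => G a (x + h * u) := (hG.cont a).comp (by fun_prop)
        exact this.integrableOn_Ioc
      · exact integrable_const _
    show ‖stek h G a x - G a x‖ₑ ≤ _
    rw [this]
    exact enorm_integral_le_lintegral_enorm _
  · filter_upwards [ae_restrict_mem measurableSet_Ioc] with u hu
    exact le_om (G := G) (k := h * u) ⟨by have := hu.1; positivity, by nlinarith [hu.2]⟩

lemma stek_tendsto (hG : Nice G) (a : α) (x : ℝ) {h : ℕ → ℝ} (hh : ∀ k, 0 < h k)
    (h0 : Tendsto h atTop (nhds 0)) :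
    Tendsto (fun k => stek (h k) G a x) atTop (nhds (G a x)) := by
  have hc := hG.cont a
  have h1 : HasDerivAt (fun y => ∫ u in x..y, G a u) (G a x) x :=
    intervalIntegral.integral_hasDerivAt_right (hc.intervalIntegrable _ _)
      hc.aestronglyMeasurable.stronglyMeasurableAtFilter hc.continuousAt
  rw [hasDerivAt_iff_tendsto_slope_zero] at h1
  have h2 : Tendsto h atTop (nhdsWithin 0 {0}ᶜ) :=
    tendsto_nhdsWithin_iff.2 ⟨h0, Eventually.of_forall fun k => (hh k).ne'⟩
  refine (h1.comp h2).congr fun k => ?_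
  simp [stek_eq (G := G) (h k) (hh k).ne' a x]
end


noncomputable section
variable {α : Type*} [MeasurableSpace α] {μ : Measure α} [SFinite μ] {p : ℝ} {G F : α → ℝ → ℝ}
  {n : ℕ} {x : α → ℕ → ℝ}

/-- admissible partitions -/
structure Prtn {α : Type*} [MeasurableSpace α] (n : ℕ) (x : α → ℕ → ℝ) : Prop where
  meas : ∀ j, Measurable (fun a => x a j)
  mono : ∀ a, ∀ i < n, x a i ≤ x a (i+1)
  last : ∀ a, x a n = x a 0 + 1

lemma NN_meas (hG : Measurable (Function.uncurry G)) (hx : ∀ j, Measurable (fun a => x a j)) :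
    Measurable (fun z : α × Fin n => G z.1 (x z.1 (z.2 + 1)) - G z.1 (x z.1 z.2)) := by
  refine measurable_from_prod_countable_left fun j => ?_
  exact (hG.comp (measurable_id.prodMk (hx (j+1)))).sub (hG.comp (measurable_id.prodMk (hx j)))

lemma NN_pow (hp : 1 < p) (hG : Measurable (Function.uncurry G))
    (hx : ∀ j, Measurable (fun a => x a j)) :
    NN μ p n x G ^ p =
      ∫⁻ a, ∑ j ∈ Finset.range n, ‖G a (x a (j+1)) - G a (x a j)‖ₑ ^ p ∂μ := by
  rw [NN, eN_pow _ _ hp, lintegral_prod _ ((NN_meas hG hx).enorm.pow_const p).aemeasurable]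
  congr 1 with a
  rw [lintegral_count, tsum_fintype,
    Finset.sum_range (fun j => ‖G a (x a (j+1)) - G a (x a j)‖ₑ ^ p)]

lemma NN_add (hp : 1 < p) (hG : Measurable (Function.uncurry G))
    (hF : Measurable (Function.uncurry F)) (hx : ∀ j, Measurable (fun a => x a j)) :
    NN μ p n x (fun a y => G a y + F a y) ≤ NN μ p n x G + NN μ p n x F := by
  refine le_trans (le_of_eq ?_) (eLpNorm_add_le (NN_meas hG hx).aestronglyMeasurable
    (NN_meas hF hx).aestronglyMeasurable (one_le_q hp))
  unfold NN
  congr 1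
  ext z
  simp; ring

lemma NN_deriv (hp : 1 < p) (H H' : α → ℝ → ℝ) (hH : Nice H) (hH' : Nice H')
    (hd : ∀ a y, HasDerivAt (H a) (H' a y) y) (hx : Prtn n x) :
    NN μ p n x H ^ p ≤ ENNReal.ofReal (2 ^ (p-1) * p) * (MM μ p H ^ (p-1) * MM μ p H') := by
  have hp0 : 0 < p := by linarith
  rw [NN_pow hp hH.meas hx.meas]
  have hmeas : Measurable fun z : α × ℝ =>
      ‖Function.uncurry H z‖ₑ ^ (p-1) * ‖Function.uncurry H' z‖ₑ :=
    (hH.meas.enorm.pow_const _).mul hH'.meas.enorm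
  calc _ ≤ ∫⁻ a, ENNReal.ofReal (2 ^ (p-1) * p) *
        (∫⁻ t in Ioc (0:ℝ) 1, ‖H a t‖ₑ ^ (p-1) * ‖H' a t‖ₑ) ∂μ := by
        refine lintegral_mono fun a => ?_
        refine (key_sum p hp _ _ (hd a) (hH'.cont a) n (x a) (hx.mono a)).2.trans ?_
        rw [hx.last a, lint_per (fun t => ‖H a t‖ₑ ^ (p-1) * ‖H' a t‖ₑ)]
        intro t
        simp only [hH.per, hH'.per]
    _ = ENNReal.ofReal (2 ^ (p-1) * p) * ∫⁻ z, ‖Function.uncurry H z‖ₑ ^ (p-1) *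
          ‖Function.uncurry H' z‖ₑ ∂(μ.prod (volume.restrict (Ioc (0:ℝ) 1))) := by
        rw [lintegral_const_mul' _ _ ENNReal.ofReal_ne_top, lintegral_prod _ hmeas.aemeasurable]
        rfl
    _ ≤ _ := by
        gcongr
        have h := ENNReal.lintegral_mul_norm_pow_le
          (μ := μ.prod (volume.restrict (Ioc (0:ℝ) 1)))
          (f := fun z => ‖Function.uncurry H z‖ₑ ^ p) (g := fun z => ‖Function.uncurry H' z‖ₑ ^ p)
          (hH.meas.enorm.pow_const p).aemeasurable (hH'.meas.enorm.pow_const p).aemeasurable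
          (p := 1 - 1/p) (q := 1/p)
          (by rw [sub_nonneg, div_le_one (by linarith)]; exact hp.le) (by positivity) (by ring)
        have e1 : p * (1 - 1/p) = p - 1 := by field_simp
        have e2 : p * (1/p) = 1 := by field_simp
        simp only [← eN_pow _ _ hp, ← ENNReal.rpow_mul, e1, e2, ENNReal.rpow_one] at h
        exact h

lemma MM_const_mul (c : ℝ) : MM μ p (fun a y => c * G a y) = ‖c‖ₑ * MM μ p G :=
  eLpNorm_const_smul c (Function.uncurry G) _ _

lemma NN_step (hp : 1 < p) (hG : Nice G) (hx : Prtn n x) {h h' : ℝ} (hh' : 0 < h') (hle : h' ≤ h) :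
    NN μ p n x (fun a y => stek h' G a y - stek h G a y) ≤
      12 * (om μ p G h ^ (1 - 1/p) * (ENNReal.ofReal (1/h') * om μ p G h') ^ (1/p)) := by
  have hp0 : 0 < p := by linarith
  have hh : 0 < h := by linarith
  have nH : Nice (fun a y => stek h' G a y - stek h G a y) :=
    (stek_nice hG h' hh'.ne').sub (stek_nice hG h hh.ne')
  have n1 : ∀ k, Nice (fun a y => k⁻¹ * (G a (y+k) - G a y)) := fun k =>
    ⟨(hG.diff k).meas.const_mul _, fun a => ((hG.diff k).cont a).const_mul _,
      fun a y => by rw [(hG.diff k).per a y]⟩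
  have nH' := (n1 h').sub (n1 h)
  have key := NN_deriv (μ := μ) hp _ _ nH nH' (fun a y =>
    (stek_deriv hG h' hh'.ne' a y).sub (stek_deriv hG h hh.ne' a y)) hx
  have b1 : MM μ p (fun a y => stek h' G a y - stek h G a y) ≤ 2 * om μ p G h := by
    have e : (fun a y => stek h' G a y - stek h G a y) =
      fun a y => (stek h' G a y - G a y) - (stek h G a y - G a y) := by ext; ring
    rw [e, two_mul]
    refine (MM_sub hp ((stek_nice hG h' hh'.ne').sub hG).meas
      ((stek_nice hG h hh.ne').sub hG).meas).trans ?_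
    exact add_le_add ((MM_stek_sub hp hG h' hh').trans (om_mono hle)) (MM_stek_sub hp hG h hh)
  have b2 : MM μ p (fun a y => h'⁻¹ * (G a (y+h') - G a y) - h⁻¹ * (G a (y+h) - G a y)) ≤
      3 * (ENNReal.ofReal (1/h') * om μ p G h') := by
    refine (MM_sub hp (n1 h').meas (n1 h).meas).trans ?_
    rw [MM_const_mul (G := fun a y => G a (y+h') - G a y),
      MM_const_mul (G := fun a y => G a (y+h) - G a y)]
    rw [Real.enorm_eq_ofReal (by positivity), Real.enorm_eq_ofReal (by positivity)]
    calc _ ≤ ENNReal.ofReal h'⁻¹ * om μ p G h' + ENNReal.ofReal h⁻¹ *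
          (ENNReal.ofReal (2 * (h / h')) * om μ p G h') := by
          gcongr
          · exact le_om ⟨hh'.le, le_rfl⟩
          · exact (le_om ⟨hh.le, le_rfl⟩).trans (om_double hp hG hh' hle)
      _ = _ := by
          rw [← mul_assoc (ENNReal.ofReal h⁻¹), ← ENNReal.ofReal_mul (by positivity),
            show h⁻¹ * (2 * (h/h')) = 2 * (1/h') by field_simp,
            ENNReal.ofReal_mul (by norm_num), ← one_div]
          simp only [ENNReal.ofReal_ofNat]
          ring
  rw [← ENNReal.rpow_le_rpow_iff hp0]
  refine key.trans ?_
  calc _ ≤ ENNReal.ofReal (2 ^ (p-1) * p) * ((2 * om μ p G h) ^ (p-1) *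
        (3 * (ENNReal.ofReal (1/h') * om μ p G h'))) := by
        gcongr
    _ = ENNReal.ofReal (2 ^ (p-1) * p * 2 ^ (p-1) * 3) * (om μ p G h ^ (p-1) *
          (ENNReal.ofReal (1/h') * om μ p G h')) := by
        rw [ENNReal.mul_rpow_of_nonneg _ _ (by linarith), ENNReal.ofReal_mul (q := 3) (by positivity),
          ENNReal.ofReal_mul (q := 2 ^ (p-1)) (by positivity),
          ← ENNReal.ofReal_rpow_of_pos (x := 2) (by norm_num)]
        simp only [ENNReal.ofReal_ofNat]
        ring
    _ ≤ ENNReal.ofReal (12 ^ p) * (om μ p G h ^ (p-1) *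
          (ENNReal.ofReal (1/h') * om μ p G h')) := by
        gcongr
        have h1 : p ≤ 2 ^ p := by
          have := one_add_mul_self_le_rpow_one_add (s := 1) (by norm_num) hp.le
          norm_num at this; linarith
        have h2 : (2:ℝ) ^ (p-1) = 2 ^ p / 2 := by rw [Real.rpow_sub_one (by norm_num)]
        have h3 : (12:ℝ) ^ p = 2 ^ p * 2 ^ p * 3 ^ p := by
          rw [← Real.mul_rpow, ← Real.mul_rpow] <;> norm_num
        have h4 : (2:ℝ)^p ≤ 3^p := Real.rpow_le_rpow (by norm_num) (by norm_num) hp0.le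
        rw [h2, h3]
        have h5 : (0:ℝ) < 2 ^ p := by positivity
        have h6 : p ≤ 3 ^ p := h1.trans h4
        have h7 : (0:ℝ) < 2^p * 2^p := by positivity
        nlinarith
    _ = _ := by
        rw [ENNReal.mul_rpow_of_nonneg _ _ hp0.le, ENNReal.mul_rpow_of_nonneg _ _ hp0.le,
          ← ENNReal.rpow_mul, ← ENNReal.rpow_mul, one_div_mul_cancel hp0.ne', ENNReal.rpow_one,
          ← ENNReal.ofReal_rpow_of_pos (by norm_num)]
        congr 3
        · simp
        · field_simp

lemma NN_tele (hp : 1 < p) (hG : Nice G) (hx : Prtn n x) (h : ℕ → ℝ) (h0 : h 0 = 1)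
    (hpos : ∀ k, 0 < h k) (hanti : ∀ k, h (k+1) ≤ h k) (hlim : Tendsto h atTop (nhds 0)) :
    NN μ p n x G ≤ ∑' k, 12 * (om μ p G (h k) ^ (1 - 1/p) *
      (ENNReal.ofReal (1/h (k+1)) * om μ p G (h (k+1))) ^ (1/p)) := by
  have hp0 : 0 < p := by linarith
  have fin : ∀ K, NN μ p n x (stek (h K) G) ≤ ∑ k ∈ Finset.range K,
      12 * (om μ p G (h k) ^ (1 - 1/p) *
      (ENNReal.ofReal (1/h (k+1)) * om μ p G (h (k+1))) ^ (1/p)) := by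
    intro K
    induction K with
    | zero =>
      simp only [h0, Finset.range_zero, Finset.sum_empty, nonpos_iff_eq_zero]
      unfold NN
      have : (fun z : α × Fin n => stek 1 G z.1 (x z.1 (z.2 + 1)) - stek 1 G z.1 (x z.1 z.2)) = 0 := by
        ext z
        simp [stek_one hG z.1 (x z.1 (z.2 + 1)) (x z.1 z.2)]
      rw [this, eLpNorm_zero]
    | succ K ih =>
      rw [Finset.sum_range_succ]
      have e : stek (h (K+1)) G = fun a y => stek (h K) G a y +
          (stek (h (K+1)) G a y - stek (h K) G a y) := by ext; ring
      rw [e]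
      refine (NN_add hp (stek_nice hG _ (hpos K).ne').meas
        ((stek_nice hG _ (hpos (K+1)).ne').sub (stek_nice hG _ (hpos K).ne')).meas hx.meas).trans ?_
      exact add_le_add ih (NN_step hp hG hx (hpos _) (hanti _))
  have fatou : NN μ p n x G ≤ liminf (fun K => NN μ p n x (stek (h K) G)) atTop := by
    refine Lp.eLpNorm_lim_le_liminf_eLpNorm
      (fun K => (NN_meas (stek_nice hG _ (hpos K).ne').meas hx.meas).aestronglyMeasurable) _ ?_
    refine Eventually.of_forall fun z => ?_
    exact (stek_tendsto hG z.1 _ hpos hlim).sub (stek_tendsto hG z.1 _ hpos hlim)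
  refine fatou.trans ?_
  refine liminf_le_of_frequently_le' (Frequently.of_forall fun K => ?_)
  exact (fin K).trans (ENNReal.sum_le_tsum _)
end


noncomputable section
variable {α : Type*} [MeasurableSpace α] {μ : Measure α} [SFinite μ] {p : ℝ} {G F : α → ℝ → ℝ}
  {n : ℕ} {x : α → ℕ → ℝ}

lemma lint_pow {a b s : ℝ} (ha : 0 < a) (hab : a ≤ b) (hs : s ≠ -1) :
    ∫⁻ t in Ioc a b, ENNReal.ofReal (t ^ s) =
      ENNReal.ofReal ((b ^ (s+1) - a ^ (s+1)) / (s+1)) := by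
  have h0 : (0:ℝ) ∉ uIcc a b := by
    rw [uIcc_of_le hab]; intro h; linarith [h.1]
  have := integral_rpow (a := a) (b := b) (r := s) (Or.inr ⟨hs, h0⟩)
  rw [← this, intervalIntegral.integral_of_le hab, ofReal_integral_eq_lintegral_ofReal]
  · have := (intervalIntegral.intervalIntegrable_rpow (μ := volume) (r := s) (Or.inr h0))
    rw [intervalIntegrable_iff_integrableOn_Ioc_of_le hab] at this
    exact this
  · filter_upwards [ae_restrict_mem measurableSet_Ioc] with t ht
    exact Real.rpow_nonneg (by linarith [ht.1]) _

lemma sum_le_int (w : ℝ → ℝ≥0∞) (h : ℕ → ℝ) (h0 : h 0 = 1)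
    (hpos : ∀ k, 0 < h k) (hanti : ∀ k, h (k+1) ≤ h k) :
    ∑' k, ∫⁻ t in Ioc (h (k+1)) (h k), w t ≤ ∫⁻ t in Ioc (0:ℝ) 1, w t := by
  have ha : Antitone h := antitone_nat_of_succ_le hanti
  rw [← lintegral_iUnion (fun k => measurableSet_Ioc)]
  · refine lintegral_mono_set ?_
    refine iUnion_subset fun k t ht => ⟨(hpos _).trans ht.1, ht.2.trans ?_⟩
    rw [← h0]; exact ha (Nat.zero_le _)
  · exact ha.pairwise_disjoint_on_Ioc_succ

lemma main_ge_two (hp : 1 < p) (hp2 : 2 ≤ p) (hG : Nice G) (hx : Prtn n x) :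
    NN μ p n x G ≤ 24 * om μ p G 1 + 48 * (ENNReal.ofReal (1/p) *
      ∫⁻ t in Ioc (0:ℝ) 1, ENNReal.ofReal (t ^ (-(1/p)) / t) * om μ p G t) := by
  have hp0 : 0 < p := by linarith
  set r : ℝ := (2:ℝ) ^ (-p) with hr
  have r0 : 0 < r := by positivity
  have r1 : r < 1 := Real.rpow_lt_one_of_one_lt_of_neg (by norm_num) (by linarith)
  have hpos : ∀ k, 0 < r ^ k := fun k => by positivity
  have hanti : ∀ k, r ^ (k+1) ≤ r ^ k := fun k => pow_le_pow_of_le_one r0.le r1.le (by omega)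
  have hrk : ∀ k : ℕ, (r ^ k) ^ (-(1/p)) = 2 ^ k := by
    intro k
    rw [hr, ← Real.rpow_natCast, ← Real.rpow_natCast, ← Real.rpow_mul (by positivity),
      ← Real.rpow_mul (by positivity)]
    congr 1
    field_simp
  have tele := NN_tele (μ := μ) hp hG hx (fun k => r ^ k) (by simp) hpos hanti
    (tendsto_pow_atTop_nhds_zero_of_lt_one r0.le r1)
  have term : ∀ k, 12 * (om μ p G (r ^ k) ^ (1 - 1/p) *
      (ENNReal.ofReal (1/r ^ (k+1)) * om μ p G (r ^ (k+1))) ^ (1/p)) ≤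
      24 * (ENNReal.ofReal (2 ^ k) * om μ p G (r ^ k)) := by
    intro k
    have e1 : (ENNReal.ofReal (1/r ^ (k+1))) ^ (1/p) = 2 * ENNReal.ofReal (2 ^ k) := by
      rw [ENNReal.ofReal_rpow_of_pos (by positivity)]
      have : (1 / r^(k+1)) ^ (1/p) = 2 * 2 ^ k := by
        rw [one_div, Real.inv_rpow (hpos _).le, ← Real.rpow_neg (hpos _).le, hrk, pow_succ]; ring
      rw [this, ENNReal.ofReal_mul (by norm_num)]; simp
    rw [ENNReal.mul_rpow_of_nonneg _ _ (by positivity), e1]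
    calc _ ≤ 12 * (om μ p G (r ^ k) ^ (1 - 1/p) *
      (2 * ENNReal.ofReal (2 ^ k) * om μ p G (r ^ k) ^ (1/p))) := by
          gcongr
          exact om_mono (hanti k)
      _ = 24 * (ENNReal.ofReal (2 ^ k) * (om μ p G (r ^ k) ^ (1 - 1/p) * om μ p G (r ^ k) ^ (1/p))) := by ring
      _ = _ := by
          rw [← ENNReal.rpow_add_of_nonneg _ _ _ (by positivity)]
          · simp
          · rw [sub_nonneg, div_le_one (by linarith)]; exact hp.le
  have piece : ∀ k, ENNReal.ofReal (2 ^ k) * om μ p G (r ^ (k+1)) ≤ ENNReal.ofReal (1/p) *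
      ∫⁻ t in Ioc (r ^ (k+1)) (r ^ k), ENNReal.ofReal (t ^ (-(1/p)) / t) * om μ p G t := by
    intro k
    have e : ∫⁻ t in Ioc (r ^ (k+1)) (r ^ k), ENNReal.ofReal (t ^ (-(1/p) - 1)) =
        ENNReal.ofReal (p * 2 ^ k) := by
      rw [lint_pow (hpos _) (hanti k) (by simpa using hp0.ne')]
      congr 1
      rw [sub_add_cancel, hrk, hrk, pow_succ]
      field_simp
      ring
    calc _ = ENNReal.ofReal (1/p) * (ENNReal.ofReal (p * 2 ^ k) * om μ p G (r ^ (k+1))) := by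
          rw [← mul_assoc, ← ENNReal.ofReal_mul (by positivity)]
          congr 2; field_simp
      _ ≤ _ := by
          gcongr
          rw [← e, ← lintegral_mul_const _ (by fun_prop)]
          refine setLIntegral_mono_ae' measurableSet_Ioc (Eventually.of_forall fun t ht => ?_)
          rw [Real.rpow_sub_one (by linarith [hpos (k+1), ht.1] : t ≠ 0)]
          gcongr
          exact om_mono ht.1.le
  have hsum := sum_le_int (fun t => ENNReal.ofReal (t ^ (-(1/p)) / t) * om μ p G t)
    (fun k => r ^ k) (by simp) hpos hanti
  refine (tele.trans (ENNReal.tsum_le_tsum term)).trans ?_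
  rw [tsum_eq_zero_add' ENNReal.summable]
  gcongr
  · simp
  · calc _ ≤ ∑' k, 48 * (ENNReal.ofReal (1/p) *
      ∫⁻ t in Ioc (r ^ (k+1)) (r ^ k), ENNReal.ofReal (t ^ (-(1/p)) / t) * om μ p G t) := by
          refine ENNReal.tsum_le_tsum fun k => ?_
          calc _ = 48 * (ENNReal.ofReal (2 ^ k) * om μ p G (r ^ (k+1))) := by
                rw [pow_succ (2:ℝ), ENNReal.ofReal_mul (by positivity)]
                simp only [ENNReal.ofReal_ofNat]; ring
            _ ≤ _ := mul_le_mul' le_rfl (piece k)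
      _ ≤ _ := by
          rw [ENNReal.tsum_mul_left, ENNReal.tsum_mul_left]
          gcongr

lemma main_le_two (hp : 1 < p) (hG : Nice G) (hx : Prtn n x) :
    NN μ p n x G ≤ 192 * (ENNReal.ofReal (1 - 1/p) *
      ∫⁻ t in Ioc (0:ℝ) 1, ENNReal.ofReal (t ^ (-(1/p)) / t) * om μ p G t) := by
  have hp0 : 0 < p := by linarith
  have hθ : 0 < 1 - 1/p := by rw [sub_pos, div_lt_one hp0]; exact hp
  set c := 1 - 1/p with hc
  set r : ℝ := (2:ℝ) ^ (-(1/c)) with hr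
  have r0 : 0 < r := by positivity
  have r1 : r < 1 := Real.rpow_lt_one_of_one_lt_of_neg (by norm_num) (by
    have : 0 < 1/c := by positivity
    linarith)
  have hpos : ∀ k, 0 < r ^ k := fun k => by positivity
  have hanti : ∀ k, r ^ (k+1) ≤ r ^ k := fun k => pow_le_pow_of_le_one r0.le r1.le (by omega)
  have hrk : ∀ k : ℕ, (r ^ k) ^ c = (1/2) ^ k := by
    intro k
    have e : ((1:ℝ)/2)^k = 2 ^ (-(k:ℝ)) := by
      rw [Real.rpow_neg (by norm_num), Real.rpow_natCast, one_div, inv_pow]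
    rw [hr, e, ← Real.rpow_natCast, ← Real.rpow_mul (by positivity),
      ← Real.rpow_mul (by positivity)]
    congr 1
    field_simp
  have tele := NN_tele (μ := μ) hp hG hx (fun k => r ^ k) (by simp) hpos hanti
    (tendsto_pow_atTop_nhds_zero_of_lt_one r0.le r1)
  have term : ∀ k, 12 * (om μ p G (r ^ k) ^ (1 - 1/p) *
      (ENNReal.ofReal (1/r ^ (k+1)) * om μ p G (r ^ (k+1))) ^ (1/p)) ≤
      48 * (ENNReal.ofReal ((r ^ (k+1)) ^ (-(1/p))) * om μ p G (r ^ (k+1))) := by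
    intro k
    rw [← hc]
    have e1 : (ENNReal.ofReal (1/r ^ (k+1))) ^ (1/p) = ENNReal.ofReal ((r ^ (k+1)) ^ (-(1/p))) := by
      rw [ENNReal.ofReal_rpow_of_pos (by positivity), one_div (r ^ (k+1)),
        Real.inv_rpow (hpos _).le, ← Real.rpow_neg (hpos _).le]
    have e2 : (ENNReal.ofReal (2 * (r ^ k / r ^ (k+1)))) ^ c ≤ 4 := by
      rw [ENNReal.ofReal_rpow_of_pos (by positivity), Real.mul_rpow (by norm_num) (by positivity),
        Real.div_rpow (by positivity) (by positivity), hrk, hrk]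
      rw [show (4:ℝ≥0∞) = ENNReal.ofReal 4 by simp]
      refine ENNReal.ofReal_le_ofReal ?_
      have : (2:ℝ) ^ c ≤ 2 ^ (1:ℝ) := Real.rpow_le_rpow_of_exponent_le (by norm_num) (by
        rw [hc]; have : 0 < 1/p := by positivity
        linarith)
      rw [Real.rpow_one] at this
      have e3 : ((1:ℝ)/2)^k / (1/2)^(k+1) = 2 := by rw [pow_succ]; field_simp
      rw [e3]; linarith
    rw [ENNReal.mul_rpow_of_nonneg _ _ (by positivity), e1]
    calc _ ≤ 12 * ((ENNReal.ofReal (2 * (r ^ k / r ^ (k+1))) * om μ p G (r ^ (k+1))) ^ c *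
      (ENNReal.ofReal ((r ^ (k+1)) ^ (-(1/p))) * om μ p G (r ^ (k+1)) ^ (1/p))) := by
          gcongr
          exact om_double hp hG (hpos _) (hanti k)
      _ ≤ 12 * ((4 * om μ p G (r ^ (k+1)) ^ c) *
      (ENNReal.ofReal ((r ^ (k+1)) ^ (-(1/p))) * om μ p G (r ^ (k+1)) ^ (1/p))) := by
          rw [ENNReal.mul_rpow_of_nonneg _ _ hθ.le]
          gcongr
      _ = 48 * (ENNReal.ofReal ((r ^ (k+1)) ^ (-(1/p))) *
        (om μ p G (r ^ (k+1)) ^ c * om μ p G (r ^ (k+1)) ^ (1/p))) := by ring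
      _ = _ := by
          rw [← ENNReal.rpow_add_of_nonneg _ _ hθ.le (by positivity)]
          simp [hc]
  have piece : ∀ k, ENNReal.ofReal ((r ^ k) ^ (-(1/p))) * om μ p G (r ^ k) ≤
      4 * (ENNReal.ofReal c *
      ∫⁻ t in Ioc (r ^ (k+1)) (r ^ k), ENNReal.ofReal (t ^ (-(1/p)) / t) * om μ p G t) := by
    intro k
    have e : ∫⁻ t in Ioc (r ^ (k+1)) (r ^ k), ENNReal.ofReal (t ^ (-(1/p))) =
        ENNReal.ofReal (1/c * (r ^ k) ^ c / 2) := by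
      rw [lint_pow (hpos _) (hanti k) (by intro h; linarith)]
      congr 1
      rw [show -(1/p) + 1 = c by rw [hc]; ring, hrk, hrk, pow_succ]
      field_simp
      ring
    have e4 : (r ^ k) ^ (-(1/p)) = (r^k)^c / r^k := by
      rw [← Real.rpow_sub_one (hpos k).ne', hc]; congr 1; ring
    calc _ = 4 * (ENNReal.ofReal c * (ENNReal.ofReal (1/c * (r ^ k) ^ c / 2) *
            (ENNReal.ofReal (1/(2 * r ^ k)) * om μ p G (r ^ k)))) := by
          rw [← mul_assoc, ← mul_assoc, ← mul_assoc, mul_assoc 4, ← ENNReal.ofReal_mul (by positivity),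
            mul_assoc 4,
            ← ENNReal.ofReal_mul (by positivity), show (4:ℝ≥0∞) = ENNReal.ofReal 4 by simp,
            ← ENNReal.ofReal_mul (by positivity), e4]
          congr 2; field_simp; norm_num
      _ ≤ _ := by
          gcongr
          rw [← e, ← lintegral_mul_const _ (by fun_prop)]
          refine setLIntegral_mono_ae' measurableSet_Ioc (Eventually.of_forall fun t ht => ?_)
          have t0 : 0 < t := (hpos _).trans ht.1
          calc _ ≤ ENNReal.ofReal (t ^ (-(1/p))) * (ENNReal.ofReal (1/(2 * r ^ k)) *
                (ENNReal.ofReal (2 * (r ^ k / t)) * om μ p G t)) := by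
                gcongr
                exact om_double hp hG t0 ht.2
            _ = _ := by
                rw [← mul_assoc, ← mul_assoc, mul_assoc (ENNReal.ofReal _),
                  ← ENNReal.ofReal_mul (by positivity),
                  ← ENNReal.ofReal_mul (by positivity)]
                congr 2
                have := (hpos k).ne'
                field_simp
  have hsum := sum_le_int (fun t => ENNReal.ofReal (t ^ (-(1/p)) / t) * om μ p G t)
    (fun k => r ^ k) (by simp) hpos hanti
  refine (tele.trans (ENNReal.tsum_le_tsum term)).trans ?_
  calc _ ≤ ∑' k, 192 * (ENNReal.ofReal c *
      ∫⁻ t in Ioc (r ^ (k+1+1)) (r ^ (k+1)), ENNReal.ofReal (t ^ (-(1/p)) / t) * om μ p G t) := by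
          refine ENNReal.tsum_le_tsum fun k => ?_
          refine (mul_le_mul_right (piece (k+1)) 48).trans (le_of_eq ?_)
          rw [← mul_assoc]; norm_num
      _ ≤ _ := by
          rw [ENNReal.tsum_mul_left, ENNReal.tsum_mul_left]
          gcongr
          refine le_trans ?_ hsum
          rw [tsum_eq_zero_add' (f := fun k => ∫⁻ t in Ioc (r ^ (k+1)) (r ^ k),
            ENNReal.ofReal (t ^ (-(1/p)) / t) * om μ p G t) ENNReal.summable]
          exact le_add_self

lemma NN_main (hp : 1 < p) (hG : Nice G) (hx : Prtn n x) :
    NN μ p n x G ≤ 384 * (om μ p G 1 + ENNReal.ofReal (1 / (p * (p / (p-1)))) *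
      ∫⁻ t in Ioc (0:ℝ) 1, ENNReal.ofReal (t ^ (-(1/p)) / t) * om μ p G t) := by
  have hp0 : 0 < p := by linarith
  have hc : 1 / (p * (p / (p-1))) = 1/p * (1 - 1/p) := by
    have : p - 1 ≠ 0 := by linarith
    field_simp
  rcases le_total 2 p with h | h
  · refine (main_ge_two hp h hG hx).trans ?_
    rw [mul_add]
    have h1 : ENNReal.ofReal (1/p) ≤ 2 * ENNReal.ofReal (1 / (p * (p / (p-1)))) := by
      rw [hc, show (2:ℝ≥0∞) = ENNReal.ofReal 2 by simp, ← ENNReal.ofReal_mul (by norm_num)]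
      refine ENNReal.ofReal_le_ofReal ?_
      have : 1/p ≤ 1/2 := one_div_le_one_div_of_le (by norm_num) h
      have : 0 < 1/p := by positivity
      nlinarith
    refine add_le_add (mul_le_mul' (by norm_num) le_rfl) ?_
    refine (mul_le_mul' le_rfl (mul_le_mul' h1 le_rfl)).trans ?_
    rw [mul_assoc 2, ← mul_assoc (48:ℝ≥0∞)]
    exact mul_le_mul' (by norm_num) le_rfl
  · refine (main_le_two hp hG hx).trans ?_
    rw [mul_add]
    have h1 : ENNReal.ofReal (1 - 1/p) ≤ 2 * ENNReal.ofReal (1 / (p * (p / (p-1)))) := by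
      rw [hc, show (2:ℝ≥0∞) = ENNReal.ofReal 2 by simp, ← ENNReal.ofReal_mul (by norm_num)]
      refine ENNReal.ofReal_le_ofReal ?_
      have : 1/2 ≤ 1/p := one_div_le_one_div_of_le hp0 h
      have : 0 ≤ 1 - 1/p := by rw [sub_nonneg, div_le_one hp0]; exact hp.le
      nlinarith
    refine le_add_left ?_
    refine (mul_le_mul' le_rfl (mul_le_mul' h1 le_rfl)).trans ?_
    rw [mul_assoc 2, ← mul_assoc (192:ℝ≥0∞)]
    exact mul_le_mul' (by norm_num) le_rfl
end


noncomputable section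
variable {p : ℝ} {F f : ℝ → ℝ → ℝ}

/-- Lebesgue measure on the unit interval -/
abbrev lam : Measure ℝ := volume.restrict (Ioc (0:ℝ) 1)

lemma enorm_powr (hp : 1 < p) (x : ℝ) : ENNReal.ofReal (|x| ^ p) = ‖x‖ₑ ^ p := by
  rw [← ENNReal.ofReal_rpow_of_nonneg (abs_nonneg x) (by linarith), Real.enorm_eq_ofReal_abs]

lemma lp_eq (hp : 1 < p) (hf : Measurable (Function.uncurry f)) : lpNorm2 p f = MM lam p f := by
  have hp0 : 0 < p := by linarith
  refine (ENNReal.rpow_left_injective hp0.ne') ?_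
  show _ ^ p = _ ^ p
  rw [MM_pow hp hf, lpNorm2, ← ENNReal.rpow_mul, one_div_mul_cancel hp0.ne', ENNReal.rpow_one]
  simp only [enorm_powr hp]
  rw [Measure.restrict_congr_set (Ioc_ae_eq_Icc (a := (0:ℝ)) (b := 1) (μ := volume)).symm]

lemma MM_swap (hf : Measurable (Function.uncurry f)) :
    MM lam p (fun x y => f y x) = MM lam p f := by
  have := eLpNorm_comp_measurePreserving (p := ENNReal.ofReal p) (g := Function.uncurry f)
    hf.aestronglyMeasurable (Measure.measurePreserving_swap (μ := lam) (ν := lam))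
  exact this

lemma meas_swap (hf : Measurable (Function.uncurry f)) :
    Measurable (Function.uncurry fun x y => f y x) := hf.comp measurable_swap

lemma meas_sh (hf : Measurable (Function.uncurry f)) (s t : ℝ) :
    Measurable (Function.uncurry fun x y => f (x + s) (y + t)) :=
  hf.comp (by fun_prop : Measurable fun q : ℝ × ℝ => (q.1 + s, q.2 + t))

lemma meas_mix (hf : Measurable (Function.uncurry f)) (s t : ℝ) :
    Measurable (Function.uncurry fun x y =>
      f (x + s) (y + t) - f (x + s) y - f x (y + t) + f x y) := by
  have h1 := meas_sh hf s t
  have h2 := meas_sh hf s 0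
  have h3 := meas_sh hf 0 t
  simp only [add_zero] at h2 h3
  exact ((h1.sub h2).sub h3).add hf

lemma lp_swap (hp : 1 < p) (hf : Measurable (Function.uncurry f)) :
    lpNorm2 p (fun x y => f y x) = lpNorm2 p f := by
  rw [lp_eq hp hf, lp_eq hp (meas_swap hf), MM_swap hf]

lemma mix_swap (hp : 1 < p) (hf : Measurable (Function.uncurry f)) (u v : ℝ) :
    mixedModulus p (fun x y => f y x) u v = mixedModulus p f v u := by
  have key : ∀ s t : ℝ, lpNorm2 p (fun x y => f (y + t) (x + s) - f y (x + s) - f (y + t) x + f y x)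
      = lpNorm2 p (fun x y => f (x + t) (y + s) - f (x + t) y - f x (y + s) + f x y) := by
    intro s t
    rw [← lp_swap hp (meas_mix hf t s)]
    congr 1; ext x y; ring
  unfold mixedModulus
  refine le_antisymm ?_ ?_
  · refine iSup₂_le fun s hs => iSup₂_le fun t ht => ?_
    rw [key]
    exact le_iSup₂_of_le t ht (le_iSup₂_of_le s hs le_rfl)
  · refine iSup₂_le fun s hs => iSup₂_le fun t ht => ?_
    rw [← key]
    exact le_iSup₂_of_le t ht (le_iSup₂_of_le s hs le_rfl)

lemma mod_swap (hp : 1 < p) (hf : Measurable (Function.uncurry f)) (u : ℝ) :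
    modulus2 p (fun x y => f y x) u = modulus2 p f u := by
  have key : ∀ s t : ℝ, lpNorm2 p (fun x y => f (y + t) (x + s) - f y x)
      = lpNorm2 p (fun x y => f (x + t) (y + s) - f x y) := by
    intro s t
    exact lp_swap (f := fun x y => f (x + t) (y + s) - f x y) hp ((meas_sh hf t s).sub hf)
  unfold modulus2
  refine le_antisymm ?_ ?_
  · refine iSup₂_le fun s hs => ?_
    rw [key]
    exact le_iSup₂_of_le s.swap (by simpa [add_comm] using hs) le_rfl
  · refine iSup₂_le fun s hs => ?_
    rw [← key]
    exact le_iSup₂_of_le s.swap (by simpa [add_comm] using hs) le_rfl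

lemma Jp_swap (hp : 1 < p) (hf : Measurable (Function.uncurry f)) :
    Jp p (fun x y => f y x) = Jp p f := by
  unfold Jp; simp only [mod_swap hp hf]

lemma Kp_swap (hp : 1 < p) (hf : Measurable (Function.uncurry f)) :
    Kp p (fun x y => f y x) = Kp p f := by
  unfold Kp; simp only [mix_swap hp hf]
  simp only [add_comm]

lemma mix_le {u v s t : ℝ} (hs : s ∈ Icc 0 u) (ht : t ∈ Icc 0 v) :
    lpNorm2 p (fun x y => f (x + s) (y + t) - f (x + s) y - f x (y + t) + f x y) ≤
      mixedModulus p f u v :=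
  le_iSup₂_of_le s hs (le_iSup₂_of_le t ht le_rfl)

lemma mod_le {u : ℝ} (h : ℝ × ℝ) (hs : Real.sqrt (h.1 ^ 2 + h.2 ^ 2) ≤ u) :
    lpNorm2 p (fun x y => f (x + h.1) (y + h.2) - f x y) ≤ modulus2 p f u :=
  le_iSup₂_of_le h hs le_rfl

lemma mix_mono {u v u' v' : ℝ} (hu : u ≤ u') (hv : v ≤ v') :
    mixedModulus p f u v ≤ mixedModulus p f u' v' :=
  iSup₂_le fun _ hs => iSup₂_le fun _ ht => mix_le ⟨hs.1, hs.2.trans hu⟩ ⟨ht.1, ht.2.trans hv⟩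

lemma mod_mono : Monotone (modulus2 p f) := fun _ _ huv =>
  iSup₂_le fun h hs => mod_le h (hs.trans huv)

lemma mono2_aemeas (g : ℝ → ℝ → ℝ≥0∞)
    (hg : ∀ u u' v v', u ≤ u' → v ≤ v' → g u v ≤ g u' v') :
    AEMeasurable (Function.uncurry g) (lam.prod lam) := by
  have h1 : NullMeasurable (Function.uncurry g) (volume : Measure (ℝ × ℝ)) := by
    refine measurable_of_Ioi (δ := NullMeasurableSpace (ℝ × ℝ) volume) fun c => ?_
    have hU : IsUpperSet {w : Fin 2 → ℝ | c < g (w 0) (w 1)} := fun a b hab ha =>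
      lt_of_lt_of_le ha (hg _ _ _ _ (hab 0) (hab 1))
    have := hU.ordConnected.nullMeasurableSet
    have mp := (volume_preserving_finTwoArrow ℝ).symm
    have h3 := this.preimage mp.quasiMeasurePreserving
    exact h3
  have h2 := h1.aemeasurable
  rw [Measure.prod_restrict]
  rw [Measure.volume_eq_prod] at h2
  exact h2.restrict

lemma Ip_eq (p : ℝ) (f : ℝ → ℝ → ℝ) : Ip p f = ∫⁻ u in Ioc (0:ℝ) 1, ∫⁻ v in Ioc (0:ℝ) 1,
    ENNReal.ofReal (u ^ (-(1/p)) / u) * (ENNReal.ofReal (v ^ (-(1/p)) / v) *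
      mixedModulus p f u v) := by
  refine setLIntegral_congr_fun measurableSet_Ioc fun u hu => ?_
  refine setLIntegral_congr_fun measurableSet_Ioc fun v hv => ?_
  have hu0 := hu.1
  have hv0 := hv.1
  rw [← mul_assoc, ← ENNReal.ofReal_mul (by positivity), Real.mul_rpow hu0.le hv0.le]
  congr 2
  field_simp

lemma Ip_meas (p : ℝ) (f : ℝ → ℝ → ℝ) : AEMeasurable (Function.uncurry fun u v : ℝ =>
    ENNReal.ofReal (u ^ (-(1/p)) / u) * (ENNReal.ofReal (v ^ (-(1/p)) / v) *
      mixedModulus p f u v)) (lam.prod lam) := by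
  have h := mono2_aemeas (mixedModulus p f) (fun _ _ _ _ => mix_mono)
  refine AEMeasurable.mul ?_ (AEMeasurable.mul ?_ h)
  · exact (by fun_prop : Measurable fun q : ℝ × ℝ => ENNReal.ofReal (q.1 ^ (-(1/p)) / q.1)).aemeasurable
  · exact (by fun_prop : Measurable fun q : ℝ × ℝ => ENNReal.ofReal (q.2 ^ (-(1/p)) / q.2)).aemeasurable

lemma Ip_swap (hp : 1 < p) (hf : Measurable (Function.uncurry f)) :
    Ip p (fun x y => f y x) = Ip p f := by
  rw [Ip_eq, Ip_eq, lintegral_lintegral_swap (Ip_meas p f)]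
  simp only [mix_swap hp hf]
  refine lintegral_congr fun u => lintegral_congr fun v => ?_
  ring
end


noncomputable section
variable {p : ℝ} {F f : ℝ → ℝ → ℝ}

/-- the constant 1/(p p') -/
abbrev cc (p : ℝ) : ℝ≥0∞ := ENNReal.ofReal (1 / (p * (p / (p-1))))

/-- weight -/
abbrev ww (p t : ℝ) : ℝ≥0∞ := ENNReal.ofReal (t ^ (-(1/p)) / t)

/-- main bound -/
def VB (p : ℝ) (f : ℝ → ℝ → ℝ) : ℝ≥0∞ :=
  384 ^ 2 * (mixedModulus p f 1 1 + cc p * Kp p f + cc p ^ 2 * Ip p f)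

/-- one variable bound -/
def B1 (p : ℝ) (f : ℝ → ℝ → ℝ) : ℝ≥0∞ := 384 * (modulus2 p f 1 + cc p * Jp p f)

/-- partition sum -/
def SS (p : ℝ) (n : ℕ) (y : ℕ → ℝ) (g : ℝ → ℝ) : ℝ≥0∞ :=
  (∑ j ∈ Finset.range n, ‖g (y (j+1)) - g (y j)‖ₑ ^ p) ^ (1/p)

/-- plain partitions -/
structure Pt (n : ℕ) (y : ℕ → ℝ) : Prop where
  mono : ∀ i < n, y i ≤ y (i+1)
  last : y n = y 0 + 1

/-- continuous biperiodic -/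
structure CB (F : ℝ → ℝ → ℝ) : Prop where
  cont : Continuous (Function.uncurry F)
  per : BiPeriodic F

lemma CB.meas (h : CB F) : Measurable (Function.uncurry F) := h.cont.measurable

lemma CB.swap (h : CB F) : CB (fun x y => F y x) where
  cont := h.cont.comp continuous_swap
  per := ⟨fun x y => h.per.2 y x, fun x y => h.per.1 y x⟩

lemma CB.nice (h : CB F) : Nice F where
  meas := h.meas
  cont a := h.cont.comp (by fun_prop : Continuous fun y : ℝ => (a, y))
  per a x := h.per.2 a x

lemma VB_swap (hp : 1 < p) (hf : Measurable (Function.uncurry f)) :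
    VB p (fun x y => f y x) = VB p f := by
  unfold VB; rw [mix_swap hp hf, Kp_swap hp hf, Ip_swap hp hf]

lemma B1_swap (hp : 1 < p) (hf : Measurable (Function.uncurry f)) :
    B1 p (fun x y => f y x) = B1 p f := by
  unfold B1; rw [mod_swap hp hf, Jp_swap hp hf]

/-- inner estimate -/
lemma om_count (hp : 1 < p) (hF : CB F) {m : ℕ} {x : ℕ → ℝ} (hx : Pt m x) (t : ℝ) :
    om (Measure.count : Measure (Fin m)) p (fun i y => F (x (i+1)) y - F (x i) y) t ≤
      384 * (mixedModulus p F 1 t + cc p * ∫⁻ s in Ioc (0:ℝ) 1, ww p s * mixedModulus p F s t) := by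
  have hp0 : 0 < p := by linarith
  refine iSup₂_le fun k hk => ?_
  set H : ℝ → ℝ → ℝ := fun b a => F a (b+k) - F a b with hH
  have nH : Nice H := by
    refine ⟨?_, fun b => ?_, fun b a => ?_⟩
    · exact (hF.meas.comp (by fun_prop : Measurable fun q : ℝ × ℝ => (q.2, q.1 + k))).sub
        (hF.meas.comp measurable_swap)
    · exact (hF.cont.comp (by fun_prop : Continuous fun a : ℝ => (a, b + k))).sub
        (hF.cont.comp (by fun_prop : Continuous fun a : ℝ => (a, b)))
    · simp only [hH, hF.per.1]
  have px : Prtn m (fun _ : ℝ => x) := ⟨fun _ => measurable_const, fun _ => hx.mono, fun _ => hx.last⟩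
  have mm : ∀ i : Fin m, Measurable (fun y => F (x (i+1)) y - F (x i) y) := fun i =>
    ((hF.cont.comp (by fun_prop : Continuous fun a : ℝ => (x (i+1), a))).sub
        (hF.cont.comp (by fun_prop : Continuous fun a : ℝ => (x i, a)))).measurable
  have e : MM (Measure.count : Measure (Fin m)) p (fun i y => (F (x (i+1)) (y + k) - F (x i) (y+k)) -
      (F (x (i+1)) y - F (x i) y)) = NN lam p m (fun _ => x) H := by
    refine (ENNReal.rpow_left_injective hp0.ne') ?_
    show _ ^ p = _ ^ p
    rw [MM_pow hp, NN_pow hp nH.meas px.meas, lintegral_count, tsum_fintype,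
      lintegral_finsetSum]
    · rw [← Fin.sum_univ_eq_sum_range (fun i => ∫⁻ a, ‖H a (x (i+1)) - H a (x i)‖ₑ ^ p ∂lam)]
      refine Finset.sum_congr rfl fun i _ => lintegral_congr fun y => ?_
      congr 2
      simp only [hH]; ring
    · intro i _
      exact ((nH.meas.comp (by fun_prop : Measurable fun a : ℝ => (a, x (i+1)))).sub
        (nH.meas.comp (by fun_prop : Measurable fun a : ℝ => (a, x i)))).enorm.pow_const p
    · refine measurable_from_prod_countable_right fun i => ?_
      exact ((mm i).comp (measurable_id.add_const k)).sub (mm i)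
  have ho : ∀ s, om lam p H s ≤ mixedModulus p F s t := by
    intro s
    refine iSup₂_le fun l hl => ?_
    refine le_trans (le_of_eq ?_) (mix_le hl hk)
    rw [lp_eq hp (meas_mix hF.meas l k), ← MM_swap (meas_mix hF.meas l k)]
    congr 1; ext b a; simp only [hH]; ring
  rw [e]
  refine (NN_main hp nH px).trans ?_
  gcongr
  · exact ho 1
  · exact ho _

lemma vbound (hp : 1 < p) (hF : CB F) {m n : ℕ} {x : ℕ → ℝ} (hx : Pt m x) {y : ℕ → ℕ → ℝ}
    (hy : ∀ i < m, Pt n (y i)) :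
    (∑ i ∈ Finset.range m, SS p n (y i) (fun b => F (x (i+1)) b - F (x i) b) ^ p) ^ (1/p) ≤
      VB p F := by
  have hp0 : 0 < p := by linarith
  set G : Fin m → ℝ → ℝ := fun i y => F (x (i+1)) y - F (x i) y with hG
  have nG : Nice G := by
    refine ⟨measurable_from_prod_countable_right fun i => ?_, fun i => ?_, fun i a => ?_⟩
    · exact ((hF.cont.comp (by fun_prop : Continuous fun a : ℝ => (x (i+1), a))).sub
        (hF.cont.comp (by fun_prop : Continuous fun a : ℝ => (x i, a)))).measurable
    · exact (hF.cont.comp (by fun_prop : Continuous fun a : ℝ => (x (i+1), a))).sub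
        (hF.cont.comp (by fun_prop : Continuous fun a : ℝ => (x i, a)))
    · simp only [hG, hF.per.2]
  have py : Prtn n (fun i : Fin m => y i) := ⟨fun _ => measurable_of_countable _, fun i => (hy i i.2).mono,
    fun i => (hy i i.2).last⟩
  have e : (∑ i ∈ Finset.range m, SS p n (y i) (fun b => F (x (i+1)) b - F (x i) b) ^ p) =
      NN (Measure.count : Measure (Fin m)) p n (fun i : Fin m => y i) G ^ p := by
    rw [NN_pow hp nG.meas py.meas, lintegral_count, tsum_fintype]
    rw [← Fin.sum_univ_eq_sum_range (fun i => SS p n (y i) (fun b => F (x (i+1)) b - F (x i) b) ^ p)]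
    refine Finset.sum_congr rfl fun i _ => ?_
    rw [SS, ← ENNReal.rpow_mul, one_div_mul_cancel hp0.ne', ENNReal.rpow_one]
  rw [e, ← ENNReal.rpow_mul, mul_one_div_cancel hp0.ne', ENNReal.rpow_one]
  have h1 := om_count hp hF hx
  have m1 : Measurable fun t => ww p t * mixedModulus p F 1 t :=
    (by fun_prop : Measurable fun t => ww p t).mul
      (Monotone.measurable fun _ _ h => mix_mono le_rfl h)
  have m2 : Measurable fun t => ww p t * mixedModulus p F t 1 :=
    (by fun_prop : Measurable fun t => ww p t).mul
      (Monotone.measurable fun _ _ h => mix_mono h le_rfl)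
  have hK : Kp p F = (∫⁻ s in Ioc (0:ℝ) 1, ww p s * mixedModulus p F s 1) +
      ∫⁻ s in Ioc (0:ℝ) 1, ww p s * mixedModulus p F 1 s := by
    rw [← lintegral_add_left m2, Kp]
    simp only [mul_add]
  have hI : Ip p F = ∫⁻ t in Ioc (0:ℝ) 1, ww p t *
      ∫⁻ s in Ioc (0:ℝ) 1, ww p s * mixedModulus p F s t := by
    rw [← Ip_swap hp hF.meas, Ip_eq]
    refine lintegral_congr fun t => ?_
    rw [← lintegral_const_mul]
    · simp only [mix_swap hp hF.meas]
    · exact (by fun_prop : Measurable fun t => ww p t).mul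
        (Monotone.measurable fun _ _ h => mix_mono h le_rfl)
  calc _ ≤ 384 * (om Measure.count p G 1 + cc p *
      ∫⁻ t in Ioc (0:ℝ) 1, ww p t * om Measure.count p G t) := NN_main hp nG py
    _ ≤ 384 * (384 * (mixedModulus p F 1 1 + cc p * ∫⁻ s in Ioc (0:ℝ) 1, ww p s * mixedModulus p F s 1)
      + cc p * ∫⁻ t in Ioc (0:ℝ) 1, 384 * (ww p t * mixedModulus p F 1 t + cc p *
        (ww p t * ∫⁻ s in Ioc (0:ℝ) 1, ww p s * mixedModulus p F s t))) := by
        refine mul_le_mul' le_rfl (add_le_add (h1 1) (mul_le_mul' le_rfl (lintegral_mono fun t => ?_)))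
        refine (mul_le_mul' le_rfl (h1 t)).trans (le_of_eq ?_)
        ring
    _ = _ := by
        rw [lintegral_const_mul' _ _ (by simp), lintegral_add_left m1,
          lintegral_const_mul' _ _ (by simp), ← hI, VB, hK]
        ring

lemma one_bound (hp : 1 < p) (hF : CB F) {n : ℕ} {y : ℕ → ℝ} (hy : Pt n y) :
    (∫⁻ a, SS p n y (F a) ^ p ∂lam) ^ (1/p) ≤ B1 p F := by
  have hp0 : 0 < p := by linarith
  have py : Prtn n (fun _ : ℝ => y) := ⟨fun _ => measurable_const, fun _ => hy.mono, fun _ => hy.last⟩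
  have e : (∫⁻ a, SS p n y (F a) ^ p ∂lam) = NN lam p n (fun _ => y) F ^ p := by
    rw [NN_pow hp hF.meas py.meas]
    simp only [SS, ← ENNReal.rpow_mul, one_div_mul_cancel hp0.ne', ENNReal.rpow_one]
  rw [e, ← ENNReal.rpow_mul, mul_one_div_cancel hp0.ne', ENNReal.rpow_one]
  have ho : ∀ s, om lam p F s ≤ modulus2 p F s := by
    intro s
    refine iSup₂_le fun l hl => ?_
    refine le_trans (le_of_eq ?_) (mod_le (0, l) ?_)
    · rw [lp_eq (f := fun x y => F (x + (0, l).1) (y + (0, l).2) - F x y) hp ((meas_sh hF.meas 0 l).sub hF.meas)]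
      simp
    · simpa [Real.sqrt_sq hl.1] using hl.2
  refine (NN_main hp hF.nice py).trans ?_
  unfold B1 Jp
  gcongr
  · exact ho 1
  · exact ho _

lemma const_le {Z : Type*} [MeasurableSpace Z] (ρ : Measure Z) [IsProbabilityMeasure ρ]
    (hp : 1 < p) (g : Z → ℝ≥0∞) (A C : ℝ≥0∞) (h : ∀ z, A ≤ g z + C) :
    A ≤ (∫⁻ z, g z ^ p ∂ρ) ^ (1/p) + C := by
  have hp0 : 0 < p := by linarith
  rw [← tsub_le_iff_right]
  calc A - C = (∫⁻ z, (A - C) ^ p ∂ρ) ^ (1/p) := by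
        rw [lintegral_const, measure_univ, mul_one, ← ENNReal.rpow_mul, mul_one_div_cancel hp0.ne',
          ENNReal.rpow_one]
    _ ≤ _ := by
        gcongr with z
        rw [tsub_le_iff_right]; exact h z

lemma SS_add_le (hp : 1 < p) (n : ℕ) (y : ℕ → ℝ) (g h : ℝ → ℝ) :
    SS p n y g ≤ SS p n y (fun b => g b - h b) + SS p n y h := by
  refine le_trans ?_ (ENNReal.Lp_add_le _ _ _ hp.le)
  unfold SS
  gcongr with j
  refine le_trans (le_of_eq ?_) (enorm_add_le _ _)
  congr 1; ring

/-- three point partitions -/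
def tri (a b : ℝ) : ℕ → ℝ := fun j => if j = 0 then a else if j = 1 then b else a + 1

lemma tri_pt {a b : ℝ} (h : a ≤ b) (h' : b ≤ a + 1) : Pt 2 (tri a b) := by
  refine ⟨fun i hi => ?_, by simp [tri]⟩
  interval_cases i <;> simp [tri, h, h']

lemma pt_exists : Pt 1 (fun j => (j:ℝ)) := ⟨fun i _ => by simp, by simp⟩

lemma exists_rep (a b : ℝ) : ∃ k : ℤ, a ≤ b + k ∧ b + k ≤ a + 1 :=
  ⟨⌈a - b⌉, by linarith [Int.le_ceil (a - b)], by linarith [Int.ceil_lt_add_one (a - b)]⟩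

lemma CB.int1 (h : CB F) (a b : ℝ) (k : ℤ) : F (a + k) b = F a b := by
  have : Function.Periodic (fun a => F a b) 1 := fun a => h.per.1 a b
  simpa using (this.int_mul k) a

lemma vb_pair (hp : 1 < p) (hF : CB F) {n : ℕ} {y : ℕ → ℝ} (hy : Pt n y) (a b : ℝ) :
    SS p n y (fun z => F a z - F b z) ≤ VB p F := by
  have hp0 : 0 < p := by linarith
  obtain ⟨k, h1, h2⟩ := exists_rep b a
  have := vbound hp hF (tri_pt h1 h2) (fun _ _ => hy)
  refine le_trans ?_ this
  rw [← ENNReal.rpow_le_rpow_iff hp0, ← ENNReal.rpow_mul, one_div_mul_cancel hp0.ne', ENNReal.rpow_one,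
    Finset.sum_range_succ']
  refine le_trans (le_of_eq ?_) le_add_self
  simp [tri, hF.int1]

lemma single_le (hp : 1 < p) (g : ℝ → ℝ) (hg : ∀ x, g (x + 1) = g x) (C : ℝ≥0∞)
    (h : ∀ n y, Pt n y → SS p n y g ≤ C) (a b : ℝ) : ‖g a - g b‖ₑ ≤ C := by
  have hp0 : 0 < p := by linarith
  obtain ⟨k, h1, h2⟩ := exists_rep b a
  refine le_trans ?_ (h 2 _ (tri_pt h1 h2))
  rw [← ENNReal.rpow_le_rpow_iff hp0, SS, ← ENNReal.rpow_mul, one_div_mul_cancel hp0.ne',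
    ENNReal.rpow_one, Finset.sum_range_succ']
  refine le_trans (le_of_eq ?_) le_add_self
  have : Function.Periodic g 1 := hg
  have := (this.int_mul k) a
  simp [tri] at this ⊢
  rw [this]

lemma ss_bound (hp : 1 < p) (hF : CB F) {n : ℕ} {y : ℕ → ℝ} (hy : Pt n y) (a : ℝ) :
    SS p n y (F a) ≤ B1 p F + VB p F := by
  refine (const_le lam hp (fun x0 => SS p n y (F x0)) _ (VB p F) fun x0 => ?_).trans
    (add_le_add (one_bound hp hF hy) le_rfl)
  rw [add_comm]
  exact (SS_add_le hp n y (F a) (F x0)).trans (add_le_add (vb_pair hp hF hy a x0) le_rfl)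

lemma osc_bound (hp : 1 < p) (hF : CB F) (a b c : ℝ) :
    ‖F a b - F a c‖ₑ ≤ B1 p F + VB p F :=
  single_le hp (F a) (hF.per.2 a) _ (fun _ _ hy => ss_bound hp hF hy a) b c

lemma sup_bound (hp : 1 < p) (hF : CB F) (a b : ℝ) :
    ‖F a b‖ₑ ≤ lpNorm2 p F + 2 * (B1 p F + VB p F) := by
  have hp0 : 0 < p := by linarith
  rw [lp_eq hp hF.meas, MM, eN _ _ hp]
  refine const_le (lam.prod lam) hp (fun z => ‖Function.uncurry F z‖ₑ) _ _ fun z => ?_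
  have h1 := osc_bound hp hF z.1 b z.2
  have h2 := osc_bound hp hF.swap b a z.1
  rw [B1_swap hp hF.meas, VB_swap hp hF.meas] at h2
  calc ‖F a b‖ₑ = ‖F z.1 z.2 + ((F z.1 b - F z.1 z.2) + (F a b - F z.1 b))‖ₑ := by congr 1; ring
    _ ≤ _ := (enorm_add_le _ _).trans (add_le_add le_rfl
      ((enorm_add_le _ _).trans ((add_le_add h1 h2).trans (by rw [two_mul]))))
end


noncomputable section
variable {p : ℝ} {F f : ℝ → ℝ → ℝ}

lemma ofReal_SS (hp : 1 < p) (n : ℕ) (y : ℕ → ℝ) (g : ℝ → ℝ) :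
    ENNReal.ofReal ((∑ k ∈ Finset.range n, |g (y (k + 1)) - g (y k)| ^ p) ^ (1 / p)) = SS p n y g := by
  have hp0 : 0 < p := by linarith
  have h0 : ∀ k, 0 ≤ |g (y (k + 1)) - g (y k)| ^ p := fun k => Real.rpow_nonneg (abs_nonneg _) _
  rw [← ENNReal.ofReal_rpow_of_nonneg (Finset.sum_nonneg fun k _ => h0 k) (by positivity),
    ENNReal.ofReal_sum_of_nonneg fun k _ => h0 k]
  simp only [enorm_powr hp]
  rfl

lemma vp_le (hp : 1 < p) (g : ℝ → ℝ) (C : ℝ≥0∞) (h : ∀ n y, Pt n y → SS p n y g ≤ C) :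
    vp p g ≤ C := by
  refine iSup_le fun n => iSup_le fun y => iSup_le fun h1 => iSup_le fun h2 => ?_
  rw [ofReal_SS hp]
  exact h n y ⟨fun i hi => (h1 i hi).le, h2⟩

/-- strict partitions bundled -/
def PP : Type := {q : ℕ × (ℕ → ℝ) // (∀ i < q.1, q.2 i < q.2 (i+1)) ∧ q.2 q.1 = q.2 0 + 1}

instance : Nonempty PP := ⟨⟨(1, fun j => (j:ℝ)), by simp, by simp⟩⟩

lemma PP.pt (q : PP) : Pt q.1.1 q.1.2 := ⟨fun i hi => (q.2.1 i hi).le, q.2.2⟩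

lemma vp_eq (hp : 1 < p) (g : ℝ → ℝ) : vp p g = ⨆ q : PP, SS p q.1.1 q.1.2 g := by
  refine le_antisymm ?_ ?_
  · refine iSup_le fun n => iSup_le fun y => iSup_le fun h1 => iSup_le fun h2 => ?_
    rw [ofReal_SS hp]
    exact le_iSup (fun q : PP => SS p q.1.1 q.1.2 g) ⟨(n, y), h1, h2⟩
  · refine iSup_le fun q => ?_
    rw [← ofReal_SS hp]
    exact le_iSup_of_le q.1.1 (le_iSup_of_le q.1.2 (le_iSup₂_of_le q.2.1 q.2.2 le_rfl))

lemma sum_iSup_le {ι : Type*} [Nonempty ι] (h : ℕ → ι → ℝ≥0∞) (hfin : ∀ i q, h i q ≠ ⊤) (m : ℕ) :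
    ∀ C : ℝ≥0∞, (∀ π : ℕ → ι, ∑ i ∈ Finset.range m, h i (π i) ≤ C) →
      ∑ i ∈ Finset.range m, ⨆ q, h i q ≤ C := by
  classical
  induction m with
  | zero => intro C _; simp
  | succ m ih =>
    intro C hC
    rw [Finset.sum_range_succ, ENNReal.add_iSup]
    refine iSup_le fun q => ?_
    have hq : h m q ≤ C := by
      refine le_trans ?_ (hC fun _ => q)
      rw [Finset.sum_range_succ]; exact le_add_self
    have := ih (C - h m q) fun π => by
      refine ENNReal.le_sub_of_add_le_right (hfin m q) ?_
      refine le_trans (le_of_eq ?_) (hC (Function.update π m q))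
      rw [Finset.sum_range_succ, Function.update_self]
      congr 1
      refine Finset.sum_congr rfl fun i hi => ?_
      rw [Function.update_of_ne (Finset.mem_range.1 hi).ne]
    calc _ ≤ C - h m q + h m q := add_le_add this le_rfl
      _ = C := tsub_add_cancel_of_le hq

lemma pad_pt {n N : ℕ} {y : ℕ → ℝ} (hy : Pt n y) (hN : n ≤ N) : Pt N (fun j => y (min j n)) := by
  refine ⟨fun i _ => ?_, by simp [hN, hy.last]⟩
  rcases lt_or_ge i n with h | h
  · simp only [min_eq_left h.le, min_eq_left (Nat.succ_le_of_lt h)]; exact hy.mono i h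
  · simp only [min_eq_right h, min_eq_right (h.trans (Nat.le_succ i))]; exact le_rfl

lemma pad_SS (hp : 1 < p) {n N : ℕ} {y : ℕ → ℝ} (hN : n ≤ N) (g : ℝ → ℝ) :
    SS p N (fun j => y (min j n)) g = SS p n y g := by
  have hp0 : 0 < p := by linarith
  unfold SS
  congr 1
  rw [← Finset.sum_subset (Finset.range_mono hN)]
  · refine Finset.sum_congr rfl fun j hj => ?_
    have := Finset.mem_range.1 hj
    simp only [min_eq_left this.le, min_eq_left (Nat.succ_le_of_lt this)]
  · intro j _ hj
    have : n ≤ j := by simpa using hj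
    simp only [min_eq_right this, min_eq_right (this.trans (Nat.le_succ j))]
    simp [hp0]

lemma SS_ne_top (hp : 1 < p) (n : ℕ) (y : ℕ → ℝ) (g : ℝ → ℝ) : SS p n y g ≠ ⊤ := by
  rw [← ofReal_SS hp]; exact ENNReal.ofReal_ne_top

lemma vbound_vp (hp : 1 < p) (hF : CB F) {m : ℕ} {x : ℕ → ℝ} (hx : Pt m x) :
    (∑ i ∈ Finset.range m, vp p (fun b => F (x (i+1)) b - F (x i) b) ^ p) ^ (1/p) ≤ VB p F := by
  have hp0 : 0 < p := by linarith
  rw [← ENNReal.rpow_le_rpow_iff hp0, ← ENNReal.rpow_mul, one_div_mul_cancel hp0.ne', ENNReal.rpow_one]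
  have e : ∀ i, vp p (fun b => F (x (i+1)) b - F (x i) b) ^ p = ⨆ q : PP,
      SS p q.1.1 q.1.2 (fun b => F (x (i+1)) b - F (x i) b) ^ p := by
    intro i
    rw [vp_eq hp]
    exact (ENNReal.orderIsoRpow p hp0).map_iSup _
  simp only [e]
  refine sum_iSup_le _ (fun i q => ENNReal.rpow_ne_top_of_nonneg hp0.le (SS_ne_top hp _ _ _)) m _ ?_
  intro π
  set N := (Finset.range m).sup fun i => (π i).1.1 with hN
  have := vbound hp hF hx (n := N) (y := fun i j => (π i).1.2 (min j (π i).1.1)) (fun i hi =>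
    pad_pt (π i).pt (Finset.le_sup (f := fun i => (π i).1.1) (Finset.mem_range.2 hi)))
  rw [← ENNReal.rpow_le_rpow_iff hp0, ← ENNReal.rpow_mul, one_div_mul_cancel hp0.ne',
      ENNReal.rpow_one] at this
  refine le_trans (le_of_eq ?_) this
  refine Finset.sum_congr rfl fun i hi => ?_
  rw [pad_SS hp (Finset.le_sup (f := fun i => (π i).1.1) hi)]

lemma vp_tri (hp : 1 < p) (g h : ℝ → ℝ) : vp p g ≤ vp p (fun b => g b - h b) + vp p h := by
  rw [vp_eq hp g]
  refine iSup_le fun q => (SS_add_le hp _ _ g h).trans ?_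
  rw [vp_eq hp, vp_eq hp]
  exact add_le_add (le_iSup (fun q : PP => SS p q.1.1 q.1.2 fun b => g b - h b) q)
    (le_iSup (fun q : PP => SS p q.1.1 q.1.2 h) q)

lemma vp_neg (hp : 1 < p) (g h : ℝ → ℝ) : vp p (fun b => g b - h b) = vp p (fun b => h b - g b) := by
  rw [vp_eq hp, vp_eq hp]
  congr 1; ext q; unfold SS; congr 1
  refine Finset.sum_congr rfl fun j _ => ?_
  rw [← enorm_neg]; congr 2; ring

lemma enorm_toReal_sub {a b D : ℝ≥0∞} (ha : a ≠ ⊤) (hb : b ≠ ⊤) (h1 : a ≤ D + b) (h2 : b ≤ D + a) :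
    ‖a.toReal - b.toReal‖ₑ ≤ D := by
  rcases eq_or_ne D ⊤ with rfl | hD
  · simp
  rw [Real.enorm_eq_ofReal_abs, ENNReal.ofReal_le_iff_le_toReal hD, abs_le]
  have h1' := ENNReal.toReal_mono (by simp [hD, hb]) h1
  have h2' := ENNReal.toReal_mono (by simp [hD, ha]) h2
  rw [ENNReal.toReal_add hD hb] at h1'
  rw [ENNReal.toReal_add hD ha] at h2'
  constructor <;> linarith

lemma half (hp : 1 < p) (hF : CB F) (hV : VB p F < ⊤) (hB : B1 p F < ⊤) :
    (∀ x, vp p (fun y => F x y) < ⊤) ∧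
    vp p (fun x => (vp p (fun y => F x y)).toReal) ≤ VB p F := by
  have hfin : ∀ x, vp p (fun y => F x y) < ⊤ := fun x =>
    (vp_le hp _ _ fun _ _ hy => ss_bound hp hF hy x).trans_lt (by simp [hV, hB])
  refine ⟨hfin, vp_le hp _ _ fun n x hx => (le_trans ?_ (vbound_vp hp hF hx))⟩
  unfold SS
  gcongr with i
  refine enorm_toReal_sub (hfin _).ne (hfin _).ne (vp_tri hp _ _) ?_
  rw [vp_neg hp]
  exact vp_tri hp _ _

lemma concl (hp : 1 < p) (hF : CB F) (hV : VB p F < ⊤) (hB : B1 p F < ⊤) :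
    MemVpVp p F ∧ Wp p F ≤ 2 * VB p F := by
  obtain ⟨h1, h2⟩ := half hp hF hV hB
  have hV' := hV; have hB' := hB
  rw [← VB_swap hp hF.meas] at hV'
  rw [← B1_swap hp hF.meas] at hB'
  obtain ⟨h3, h4⟩ := half hp hF.swap hV' hB'
  rw [VB_swap hp hF.meas] at h4
  exact ⟨⟨h1, h3, h2.trans_lt hV, h4.trans_lt hV⟩, by rw [two_mul]; exact add_le_add h2 h4⟩
end


noncomputable section
variable {p : ℝ} {F f g : ℝ → ℝ → ℝ}

/-- measurable biperiodic -/
structure MB (f : ℝ → ℝ → ℝ) : Prop where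
  meas : Measurable (Function.uncurry f)
  per : BiPeriodic f

lemma CB.mb (h : CB F) : MB F := ⟨h.meas, h.per⟩

lemma MB.sh (h : MB f) (s t : ℝ) : MB (fun x y => f (x + s) (y + t)) :=
  ⟨meas_sh h.meas s t, fun x y => by beta_reduce; rw [add_right_comm]; exact h.per.1 _ _,
    fun x y => by beta_reduce; rw [add_right_comm]; exact h.per.2 _ _⟩

lemma MB.sub (h : MB f) (h' : MB g) : MB (fun x y => f x y - g x y) :=
  ⟨h.meas.sub h'.meas, fun x y => by simp only [h.per.1, h'.per.1],
    fun x y => by simp only [h.per.2, h'.per.2]⟩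

lemma MB.add (h : MB f) (h' : MB g) : MB (fun x y => f x y + g x y) :=
  ⟨h.meas.add h'.meas, fun x y => by simp only [h.per.1, h'.per.1],
    fun x y => by simp only [h.per.2, h'.per.2]⟩

lemma MB.dif (h : MB f) (s t : ℝ) : MB (fun x y => f (x + s) (y + t) - f x y) := (h.sh s t).sub h

lemma MB.mix (h : MB f) (s t : ℝ) :
    MB (fun x y => f (x + s) (y + t) - f (x + s) y - f x (y + t) + f x y) := by
  have h2 := h.sh s 0
  have h3 := h.sh 0 t
  simp only [add_zero] at h2 h3
  exact (((h.sh s t).sub h2).sub h3).add h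

lemma MB.swap (h : MB f) : MB (fun x y => f y x) :=
  ⟨meas_swap h.meas, fun x y => h.per.2 y x, fun x y => h.per.1 y x⟩

lemma lp_sub (hp : 1 < p) (h : MB f) (h' : MB g) :
    lpNorm2 p (fun x y => f x y - g x y) ≤ lpNorm2 p f + lpNorm2 p g := by
  rw [lp_eq hp (h.sub h').meas, lp_eq hp h.meas, lp_eq hp h'.meas]
  exact MM_sub hp h.meas h'.meas

lemma lp_add (hp : 1 < p) (h : MB f) (h' : MB g) :
    lpNorm2 p (fun x y => f x y + g x y) ≤ lpNorm2 p f + lpNorm2 p g := by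
  rw [lp_eq hp (h.add h').meas, lp_eq hp h.meas, lp_eq hp h'.meas]
  exact MM_add hp h.meas h'.meas

lemma lp_sh (hp : 1 < p) (h : MB f) (s t : ℝ) :
    lpNorm2 p (fun x y => f (x + s) (y + t)) = lpNorm2 p f := by
  have key : ∀ {g : ℝ → ℝ → ℝ}, MB g → ∀ t, lpNorm2 p (fun x y => g x (y + t)) = lpNorm2 p g := by
    intro g hg t
    have h3 := hg.sh 0 t
    simp only [add_zero] at h3
    rw [lp_eq hp h3.meas, lp_eq hp hg.meas]
    exact MM_shift hp hg.meas hg.per.2 t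
  have h2 := h.sh s 0
  simp only [add_zero] at h2
  have e1 := key h2 t
  have e2 := key h.swap s
  have e3 := lp_swap hp h2.meas
  have e4 := lp_swap hp h.meas
  rw [e1, ← e3, e2, e4]

lemma mix_le_lp (hp : 1 < p) (h : MB f) (u v : ℝ) : mixedModulus p f u v ≤ 4 * lpNorm2 p f := by
  refine iSup₂_le fun s _ => iSup₂_le fun t _ => ?_
  have h2 := h.sh s 0
  have h3 := h.sh 0 t
  have l2 := lp_sh hp h s 0
  have l3 := lp_sh hp h 0 t
  simp only [add_zero] at h2 h3 l2 l3
  refine (lp_add hp (((h.sh s t).sub h2).sub h3) h).trans ?_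
  refine (add_le_add (lp_sub hp ((h.sh s t).sub h2) h3) le_rfl).trans ?_
  refine (add_le_add (add_le_add (lp_sub hp (h.sh s t) h2) le_rfl) le_rfl).trans ?_
  rw [l2, l3, lp_sh hp h]
  refine le_of_eq ?_; ring

lemma mod_le_lp (hp : 1 < p) (h : MB f) (u : ℝ) : modulus2 p f u ≤ 2 * lpNorm2 p f := by
  refine iSup₂_le fun s _ => ?_
  refine (lp_sub hp (h.sh s.1 s.2) h).trans ?_
  rw [lp_sh hp h, two_mul]

lemma mix_le_mod (hp : 1 < p) (h : MB f) (u v : ℝ) : mixedModulus p f u v ≤ 2 * modulus2 p f u := by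
  refine iSup₂_le fun s hs => iSup₂_le fun t _ => ?_
  have hd := h.dif s 0
  have hd' := hd.sh 0 t
  have e := lp_sub hp hd' hd
  rw [lp_sh hp hd] at e
  have e2 : lpNorm2 p (fun x y => f (x + s) (y + 0) - f x y) ≤ modulus2 p f u :=
    mod_le (s, 0) (by simpa [Real.sqrt_sq hs.1] using hs.2)
  refine le_trans (le_of_eq ?_) (e.trans ?_)
  · congr 1; ext x y; simp only [add_zero]; ring
  · rw [two_mul]; exact add_le_add e2 e2

lemma mix_le_mod' (hp : 1 < p) (h : MB f) (u v : ℝ) : mixedModulus p f u v ≤ 2 * modulus2 p f v := by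
  have := mix_le_mod hp h.swap v u
  rwa [mix_swap hp h.meas, mod_swap hp h.meas] at this

lemma mod_meas : Measurable (modulus2 p f) := Monotone.measurable mod_mono

lemma ww_meas : Measurable (ww p) := by unfold ww; fun_prop

lemma Kp_le (hp : 1 < p) (h : MB f) : Kp p f ≤ 4 * Jp p f := by
  unfold Kp Jp
  rw [← lintegral_const_mul' _ _ (by simp)]
  refine lintegral_mono fun t => ?_
  refine (mul_le_mul' le_rfl (add_le_add (mix_le_mod hp h t 1) (mix_le_mod' hp h 1 t))).trans
    (le_of_eq ?_)
  ring

lemma VB_lt (hp : 1 < p) (h : MB f) (hl : lpNorm2 p f < ⊤) (hI : Ip p f < ⊤) (hJ : Jp p f < ⊤) :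
    VB p f < ⊤ := by
  have h1 : mixedModulus p f 1 1 < ⊤ := (mix_le_lp hp h 1 1).trans_lt (ENNReal.mul_lt_top (by simp) hl)
  have h2 : Kp p f < ⊤ := (Kp_le hp h).trans_lt (ENNReal.mul_lt_top (by simp) hJ)
  unfold VB cc
  refine ENNReal.mul_lt_top (by simp) ?_
  refine ENNReal.add_lt_top.2 ⟨ENNReal.add_lt_top.2 ⟨h1, ENNReal.mul_lt_top (by simp) h2⟩,
    ENNReal.mul_lt_top (by simp) hI⟩

lemma B1_lt (hp : 1 < p) (h : MB f) (hl : lpNorm2 p f < ⊤) (hJ : Jp p f < ⊤) :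
    B1 p f < ⊤ := by
  have h1 : modulus2 p f 1 < ⊤ := (mod_le_lp hp h 1).trans_lt (ENNReal.mul_lt_top (by simp) hl)
  unfold B1 cc
  refine ENNReal.mul_lt_top (by simp) ?_
  exact ENNReal.add_lt_top.2 ⟨h1, ENNReal.mul_lt_top (by simp) hJ⟩

lemma dct {Z : Type*} [MeasurableSpace Z] (ν : Measure Z) (W ω : Z → ℝ≥0∞)
    (hW : AEMeasurable W ν) (hω : AEMeasurable ω ν)
    (hWt : ∀ z, W z ≠ ⊤) (hfin : ∫⁻ z, W z * ω z ∂ν ≠ ⊤) (δ : ℕ → ℝ≥0∞) (hδ : Tendsto δ atTop (nhds 0)) :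
    Tendsto (fun k => ∫⁻ z, W z * min (ω z) (δ k) ∂ν) atTop (nhds 0) := by
  have := tendsto_lintegral_of_dominated_convergence' (μ := ν)
    (F := fun k z => W z * min (ω z) (δ k)) (f := fun _ => 0) (fun z => W z * ω z)
    (fun k => hW.mul (hω.min aemeasurable_const))
    (fun k => Eventually.of_forall fun z => mul_le_mul' le_rfl (min_le_left _ _)) hfin
    (Eventually.of_forall fun z => ?_)
  · simpa using this
  · have h1 : Tendsto (fun k => W z * δ k) atTop (nhds (W z * 0)) :=
      ENNReal.Tendsto.const_mul hδ (Or.inr (hWt z))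
    rw [mul_zero] at h1
    exact tendsto_of_tendsto_of_tendsto_of_le_of_le tendsto_const_nhds h1 (fun _ => zero_le)
      (fun k => mul_le_mul' le_rfl (min_le_right _ _))

/-- joint weight -/
abbrev w2 (p : ℝ) (z : ℝ × ℝ) : ℝ≥0∞ := ww p z.1 * ww p z.2

/-- explicit bound -/
def EE (p : ℝ) (f : ℝ → ℝ → ℝ) (δ : ℝ≥0∞) : ℝ≥0∞ :=
  δ + 2 * (384 * (4 * δ + cc p * ∫⁻ t, ww p t * min (2 * modulus2 p f t) (4 * δ) ∂lam) +
    384 ^ 2 * (4 * δ + cc p * ∫⁻ t, ww p t * (2 * min (4 * modulus2 p f t) (4 * δ)) ∂lam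
      + cc p ^ 2 * ∫⁻ z, w2 p z * min (2 * mixedModulus p f z.1 z.2) (4 * δ) ∂(lam.prod lam)))

lemma Ip_prod (p : ℝ) (f : ℝ → ℝ → ℝ) :
    Ip p f = ∫⁻ z, w2 p z * mixedModulus p f z.1 z.2 ∂(lam.prod lam) := by
  have h := Ip_meas p f
  have e := lintegral_prod _ h
  rw [Ip_eq]
  refine e.symm.trans (lintegral_congr fun z => ?_)
  simp only [Function.uncurry, w2, ww, mul_assoc]

lemma G_bound (hp : 1 < p) (hF : CB F) (h : MB f)
    (h1 : ∀ u v, mixedModulus p F u v ≤ 2 * mixedModulus p f u v)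
    (h2 : ∀ u, modulus2 p F u ≤ 2 * modulus2 p f u) {δ : ℝ≥0∞} (h3 : lpNorm2 p F ≤ δ) (a b : ℝ) :
    ‖F a b‖ₑ ≤ EE p f δ := by
  have m1 : ∀ u v, mixedModulus p F u v ≤ 4 * δ := fun u v =>
    (mix_le_lp hp hF.mb u v).trans (mul_le_mul' le_rfl h3)
  have m2 : ∀ u, modulus2 p F u ≤ 4 * δ := fun u =>
    (mod_le_lp hp hF.mb u).trans (mul_le_mul' (by norm_num) h3)
  refine (sup_bound hp hF a b).trans ?_
  unfold EE B1 VB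
  refine add_le_add h3 (mul_le_mul' le_rfl (add_le_add (mul_le_mul' le_rfl (add_le_add (m2 1)
    (mul_le_mul' le_rfl ?_))) (mul_le_mul' le_rfl (add_le_add (add_le_add (m1 1 1)
    (mul_le_mul' le_rfl ?_)) (mul_le_mul' le_rfl ?_)))))
  · exact lintegral_mono fun t => mul_le_mul' le_rfl (le_min (h2 t) (m2 t))
  · refine lintegral_mono fun t => mul_le_mul' le_rfl ?_
    have e : (2:ℝ≥0∞) * 2 = 4 := by norm_num
    rw [two_mul]
    refine add_le_add (le_min ?_ (m1 _ _)) (le_min ?_ (m1 _ _))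
    · refine (h1 _ _).trans ?_
      rw [← e, mul_assoc]
      exact mul_le_mul' le_rfl (mix_le_mod hp h _ _)
    · refine (h1 _ _).trans ?_
      rw [← e, mul_assoc]
      exact mul_le_mul' le_rfl (mix_le_mod' hp h _ _)
  · rw [Ip_prod]
    exact lintegral_mono fun z => mul_le_mul' le_rfl (le_min (h1 _ _) (m1 _ _))

lemma EE_tendsto (hI : Ip p f < ⊤) (hJ : Jp p f < ⊤) (δ : ℕ → ℝ≥0∞) (hδ : Tendsto δ atTop (nhds 0)) :
    Tendsto (fun k => EE p f (δ k)) atTop (nhds 0) := by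
  have h4 : Tendsto (fun k => 4 * δ k) atTop (nhds 0) := by
    have := ENNReal.Tendsto.const_mul (a := 4) hδ (Or.inr (by simp))
    simpa using this
  have cm : ∀ {u : ℕ → ℝ≥0∞} (c : ℝ≥0∞), c ≠ ⊤ → Tendsto u atTop (nhds 0) →
      Tendsto (fun k => c * u k) atTop (nhds 0) := by
    intro u c hc hu
    have := ENNReal.Tendsto.const_mul (a := c) hu (Or.inr hc)
    simpa using this
  have ad : ∀ {u v : ℕ → ℝ≥0∞}, Tendsto u atTop (nhds 0) → Tendsto v atTop (nhds 0) →
      Tendsto (fun k => u k + v k) atTop (nhds 0) := by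
    intro u v hu hv
    simpa using hu.add hv
  have fJ : ∀ c : ℝ≥0∞, c ≠ ⊤ → ∫⁻ t, ww p t * (c * modulus2 p f t) ∂lam ≠ ⊤ := by
    intro c hc
    have : ∫⁻ t, ww p t * (c * modulus2 p f t) ∂lam = c * Jp p f := by
      rw [Jp, ← lintegral_const_mul' _ _ hc]
      refine lintegral_congr fun t => ?_
      ring
    rw [this]; exact ENNReal.mul_ne_top hc hJ.ne
  have t1 := dct lam (ww p) (fun t => 2 * modulus2 p f t) ww_meas.aemeasurable
    (mod_meas.const_mul 2).aemeasurable (fun t => by simp) (fJ 2 (by simp)) _ h4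
  have t2 := dct lam (ww p) (fun t => 4 * modulus2 p f t) ww_meas.aemeasurable
    (mod_meas.const_mul 4).aemeasurable (fun t => by simp) (fJ 4 (by simp)) _ h4
  have t2' := cm 2 (by simp) t2
  have t3 := dct (lam.prod lam) (w2 p) (fun z => 2 * mixedModulus p f z.1 z.2)
    ((ww_meas.comp measurable_fst).mul (ww_meas.comp measurable_snd)).aemeasurable
    ((mono2_aemeas (mixedModulus p f) (fun _ _ _ _ => mix_mono)).const_mul 2)
    (fun z => ENNReal.mul_ne_top (by simp) (by simp)) (by
      have : ∫⁻ z, w2 p z * (2 * mixedModulus p f z.1 z.2) ∂(lam.prod lam) = 2 * Ip p f := by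
        rw [Ip_prod, ← lintegral_const_mul' _ _ (by simp)]
        refine lintegral_congr fun t => ?_
        ring
      rw [this]; exact ENNReal.mul_ne_top (by simp) hI.ne) _ h4
  have e2 : ∀ k, 2 * ∫⁻ t, ww p t * min (4 * modulus2 p f t) (4 * δ k) ∂lam =
      ∫⁻ t, ww p t * (2 * min (4 * modulus2 p f t) (4 * δ k)) ∂lam := by
    intro k
    rw [← lintegral_const_mul' _ _ (by simp)]
    refine lintegral_congr fun t => ?_
    ring
  simp only [e2] at t2'
  unfold EE
  refine ad hδ (cm 2 (by simp) (ad (cm 384 (by simp) (ad h4 (cm _ (by simp) t1))) (cm _ (by simp)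
    (ad (ad h4 (cm _ (by simp) t2')) (cm _ (by simp) t3)))))

lemma mod_small (hp : 1 < p) {t : ℝ} (ht : 0 < t) (ht2 : 2 * t ≤ 1) :
    modulus2 p f t ≤ ENNReal.ofReal (4 * t ^ (1/p)) * Jp p f := by
  have hp0 : 0 < p := by linarith
  have h1 : ENNReal.ofReal (t ^ (-(1/p)) / 4) * modulus2 p f t ≤ Jp p f := by
    calc _ = ∫⁻ s in Ioc t (2 * t), ENNReal.ofReal (t ^ (-(1/p)) / 4 / t) * modulus2 p f t := by
          rw [setLIntegral_const, Real.volume_Ioc, mul_right_comm, ← ENNReal.ofReal_mul (by positivity)]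
          congr 2; field_simp; ring
      _ ≤ ∫⁻ s in Ioc t (2 * t), ww p s * modulus2 p f s := by
          refine setLIntegral_mono_ae' measurableSet_Ioc (Eventually.of_forall fun s hs => ?_)
          have s0 : 0 < s := ht.trans hs.1
          refine mul_le_mul' (ENNReal.ofReal_le_ofReal ?_) (mod_mono hs.1.le)
          have a1 : (2 * t) ^ (-(1/p)) ≤ s ^ (-(1/p)) :=
            Real.rpow_le_rpow_of_nonpos s0 hs.2 (by simp; positivity)
          have a2 : (2:ℝ)⁻¹ ≤ 2 ^ (-(1/p)) := by
            rw [← Real.rpow_neg_one]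
            refine Real.rpow_le_rpow_of_exponent_le (by norm_num) ?_
            have : 1/p ≤ 1 := by rw [div_le_one hp0]; exact hp.le
            linarith
          rw [Real.mul_rpow (by norm_num) ht.le] at a1
          have t0 : 0 < t ^ (-(1/p)) := by positivity
          rw [div_div, div_le_div_iff₀ (by positivity) s0]
          have := hs.2
          have b1 : t ^ (-(1/p)) / 2 ≤ s ^ (-(1/p)) := by nlinarith
          nlinarith
      _ ≤ _ := by
          unfold Jp
          exact lintegral_mono_set fun s hs => ⟨ht.trans hs.1, hs.2.trans ht2⟩
  calc modulus2 p f t = ENNReal.ofReal (4 * t ^ (1/p)) * (ENNReal.ofReal (t ^ (-(1/p)) / 4) *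
        modulus2 p f t) := by
        rw [← mul_assoc, ← ENNReal.ofReal_mul (by positivity)]
        have : 4 * t ^ (1/p) * (t ^ (-(1/p)) / 4) = 1 := by
          rw [Real.rpow_neg ht.le]
          have : t ^ (1/p) ≠ 0 := by positivity
          field_simp
        rw [this]; simp
    _ ≤ _ := mul_le_mul' le_rfl h1
end


noncomputable section
variable {p : ℝ} {F f g : ℝ → ℝ → ℝ}

lemma loc_int (hp : 1 < p) (h : MB f) (hl : lpNorm2 p f < ⊤) :
    LocallyIntegrable (Function.uncurry f) (volume : Measure (ℝ × ℝ)) := by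
  have hp0 : 0 < p := by linarith
  have hfin : ∫⁻ z, ‖Function.uncurry f z‖ₑ ∂(lam.prod lam) < ⊤ := by
    have := jensen (lam.prod lam) p hp (fun z => ‖Function.uncurry f z‖ₑ) h.meas.enorm.aemeasurable
    rw [← eN_pow _ _ hp] at this
    rw [lp_eq hp h.meas, MM] at hl
    have h2 := this.trans_lt (ENNReal.rpow_lt_top_of_nonneg hp0.le hl.ne)
    by_contra hc
    rw [not_lt, top_le_iff] at hc
    rw [hc, ENNReal.top_rpow_of_pos hp0] at h2
    exact lt_irrefl _ h2
  rintro ⟨a, b⟩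
  refine ⟨Ioc (a - 1/2) (a - 1/2 + 1) ×ˢ Ioc (b - 1/2) (b - 1/2 + 1),
    prod_mem_nhds (Ioc_mem_nhds (by linarith) (by linarith)) (Ioc_mem_nhds (by linarith) (by linarith)), ?_⟩
  refine ⟨h.meas.aestronglyMeasurable, ?_⟩
  rw [hasFiniteIntegral_iff_enorm, Measure.volume_eq_prod, ← Measure.prod_restrict,
    lintegral_prod _ h.meas.enorm.aemeasurable]
  rw [lintegral_prod _ h.meas.enorm.aemeasurable] at hfin
  have e1 : ∀ x, ∫⁻ y in Ioc (b - 1/2) (b - 1/2 + 1), ‖f x y‖ₑ = ∫⁻ y in Ioc (0:ℝ) 1, ‖f x y‖ₑ :=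
    fun x => lint_per _ (fun y => by rw [h.per.2]) _
  have e2 : ∫⁻ x in Ioc (a - 1/2) (a - 1/2 + 1), ∫⁻ y in Ioc (0:ℝ) 1, ‖f x y‖ₑ =
      ∫⁻ x in Ioc (0:ℝ) 1, ∫⁻ y in Ioc (0:ℝ) 1, ‖f x y‖ₑ :=
    lint_per _ (fun x => by simp only [h.per.1]) _
  simp only [Function.uncurry]
  simp only [e1, e2]
  exact hfin

/-- mollification -/
def moll (φ : ContDiffBump (0 : ℝ × ℝ)) (f : ℝ → ℝ → ℝ) (x y : ℝ) : ℝ :=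
  ∫ t : ℝ × ℝ, φ.normed volume t * f (x - t.1) (y - t.2)

open scoped Convolution in
lemma moll_conv (φ : ContDiffBump (0 : ℝ × ℝ)) (f : ℝ → ℝ → ℝ) (z : ℝ × ℝ) :
    (φ.normed volume ⋆[ContinuousLinearMap.lsmul ℝ ℝ, volume] Function.uncurry f) z =
      moll φ f z.1 z.2 := rfl

lemma moll_int (φ : ContDiffBump (0 : ℝ × ℝ))
    (hf : LocallyIntegrable (Function.uncurry f) (volume : Measure (ℝ × ℝ))) (x y : ℝ) :
    Integrable (fun t : ℝ × ℝ => φ.normed volume t * f (x - t.1) (y - t.2)) :=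
  φ.hasCompactSupport_normed.convolutionExists_left (ContinuousLinearMap.lsmul ℝ ℝ)
    φ.continuous_normed hf (x, y)

lemma moll_CB (φ : ContDiffBump (0 : ℝ × ℝ)) (h : MB f)
    (hf : LocallyIntegrable (Function.uncurry f) (volume : Measure (ℝ × ℝ))) : CB (moll φ f) where
  cont := φ.hasCompactSupport_normed.continuous_convolution_left (ContinuousLinearMap.lsmul ℝ ℝ)
    φ.continuous_normed hf
  per := ⟨fun x y => by
      unfold moll; congr 1; ext t; rw [add_sub_right_comm, h.per.1],
    fun x y => by
      unfold moll; congr 1; ext t; rw [add_sub_right_comm, h.per.2]⟩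

/-- the probability measure -/
def rho (φ : ContDiffBump (0 : ℝ × ℝ)) : Measure (ℝ × ℝ) :=
  (volume : Measure (ℝ × ℝ)).withDensity fun t => ENNReal.ofReal (φ.normed volume t)

lemma rho_lint (φ : ContDiffBump (0 : ℝ × ℝ)) {g : ℝ × ℝ → ℝ} (hg : Measurable g) :
    ‖∫ t : ℝ × ℝ, φ.normed volume t * g t‖ₑ ≤ ∫⁻ t, ‖g t‖ₑ ∂(rho φ) := by
  refine (enorm_integral_le_lintegral_enorm _).trans ?_
  rw [rho, lintegral_withDensity_eq_lintegral_mul _ (by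
    exact φ.continuous_normed.measurable.ennreal_ofReal) hg.enorm]
  refine lintegral_mono fun t => ?_
  simp only [Pi.mul_apply, enorm_mul]
  rw [Real.enorm_of_nonneg (φ.nonneg_normed t)]

instance (φ : ContDiffBump (0 : ℝ × ℝ)) : IsProbabilityMeasure (rho φ) := ⟨by
  rw [rho, withDensity_apply _ MeasurableSet.univ, Measure.restrict_univ,
    ← ofReal_integral_eq_lintegral_ofReal φ.integrable_normed
      (Eventually.of_forall φ.nonneg_normed), φ.integral_normed, ENNReal.ofReal_one]⟩

lemma moll_lp (hp : 1 < p) (φ : ContDiffBump (0 : ℝ × ℝ)) (h : MB f)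
    (hf : LocallyIntegrable (Function.uncurry f) (volume : Measure (ℝ × ℝ))) :
    lpNorm2 p (moll φ f) ≤ lpNorm2 p f := by
  rw [lp_eq hp (moll_CB φ h hf).meas]
  have hD : Measurable fun q : (ℝ × ℝ) × (ℝ × ℝ) => f (q.1.1 - q.2.1) (q.1.2 - q.2.2) :=
    h.meas.comp (by fun_prop : Measurable fun q : (ℝ × ℝ) × (ℝ × ℝ) =>
      (q.1.1 - q.2.1, q.1.2 - q.2.2))
  refine mink (lam.prod lam) (rho φ) p hp _ (fun z t => f (z.1 - t.1) (z.2 - t.2)) hD _ ?_ ?_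
  · rintro ⟨x, y⟩
    exact rho_lint φ (g := fun t => f (x - t.1) (y - t.2))
      (hD.comp (measurable_const.prodMk measurable_id : Measurable fun t : ℝ × ℝ => ((x, y), t)))
  · refine Eventually.of_forall fun t => le_of_eq ?_
    have := lp_sh hp h (-t.1) (-t.2)
    rw [lp_eq hp (h.sh _ _).meas] at this
    exact this

lemma moll_sub_lp (hp : 1 < p) (φ : ContDiffBump (0 : ℝ × ℝ)) (h : MB f)
    (hf : LocallyIntegrable (Function.uncurry f) (volume : Measure (ℝ × ℝ))) :
    lpNorm2 p (fun x y => moll φ f x y - f x y) ≤ modulus2 p f (2 * φ.rOut) := by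
  rw [lp_eq hp ((moll_CB φ h hf).mb.sub h).meas]
  have hD : Measurable fun q : (ℝ × ℝ) × (ℝ × ℝ) =>
      f (q.1.1 - q.2.1) (q.1.2 - q.2.2) - f q.1.1 q.1.2 :=
    (h.meas.comp (by fun_prop : Measurable fun q : (ℝ × ℝ) × (ℝ × ℝ) =>
      (q.1.1 - q.2.1, q.1.2 - q.2.2))).sub (h.meas.comp measurable_fst)
  refine mink (lam.prod lam) (rho φ) p hp _
    (fun z t => f (z.1 - t.1) (z.2 - t.2) - f z.1 z.2) hD _ ?_ ?_
  · rintro ⟨x, y⟩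
    have e : moll φ f x y - f x y = ∫ t : ℝ × ℝ, φ.normed volume t *
        (f (x - t.1) (y - t.2) - f x y) := by
      simp only [mul_sub]
      rw [integral_sub (moll_int φ hf x y) (φ.integrable_normed.mul_const _), integral_mul_const,
        φ.integral_normed, one_mul]
      rfl
    simp only [Function.uncurry]
    rw [e]
    exact rho_lint φ (g := fun t => f (x - t.1) (y - t.2) - f x y)
      (hD.comp (measurable_const.prodMk measurable_id : Measurable fun t : ℝ × ℝ => ((x, y), t)))
  · rw [rho, ae_withDensity_iff φ.continuous_normed.measurable.ennreal_ofReal]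
    refine Eventually.of_forall fun t ht => ?_
    have ht' : t ∈ Function.support (φ.normed (volume : Measure (ℝ × ℝ))) := by
      intro h0; rw [h0] at ht; simp at ht
    rw [φ.support_normed_eq, mem_ball_zero_iff, Prod.norm_def, max_lt_iff, Real.norm_eq_abs,
      Real.norm_eq_abs] at ht'
    have e := lp_eq hp (h.dif (-t.1) (-t.2)).meas
    have e2 : lpNorm2 p (fun x y => f (x + -t.1) (y + -t.2) - f x y) ≤ modulus2 p f (2 * φ.rOut) := by
      refine mod_le (-t.1, -t.2) ?_
      have hr := φ.rOut_pos
      rw [Real.sqrt_le_left (by linarith)]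
      have a1 := abs_lt.1 ht'.1
      have a2 := abs_lt.1 ht'.2
      simp only
      nlinarith
    rw [e] at e2
    exact e2

lemma moll_mix (hp : 1 < p) (φ : ContDiffBump (0 : ℝ × ℝ)) (h : MB f) (hl : lpNorm2 p f < ⊤) (u v : ℝ) :
    mixedModulus p (moll φ f) u v ≤ mixedModulus p f u v := by
  have hf := loc_int hp h hl
  refine iSup₂_le fun s hs => iSup₂_le fun t ht => le_trans ?_ (mix_le hs ht)
  have hm := h.mix s t
  have hml : lpNorm2 p (fun x y => f (x + s) (y + t) - f (x + s) y - f x (y + t) + f x y) < ⊤ :=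
    ((mix_le ⟨hs.1, le_rfl⟩ ⟨ht.1, le_rfl⟩).trans (mix_le_lp hp h s t)).trans_lt
      (ENNReal.mul_lt_top (by simp) hl)
  refine le_trans (le_of_eq ?_) (moll_lp hp φ hm (loc_int hp hm hml))
  congr 1; ext x y
  have i1 := moll_int φ hf (x + s) (y + t)
  have i2 := moll_int φ hf (x + s) y
  have i3 := moll_int φ hf x (y + t)
  have i4 := moll_int φ hf x y
  have i12 : Integrable (fun r : ℝ × ℝ => φ.normed volume r * f (x + s - r.1) (y + t - r.2) -
      φ.normed volume r * f (x + s - r.1) (y - r.2)) := i1.sub i2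
  have i123 : Integrable (fun r : ℝ × ℝ => φ.normed volume r * f (x + s - r.1) (y + t - r.2) -
      φ.normed volume r * f (x + s - r.1) (y - r.2) -
      φ.normed volume r * f (x - r.1) (y + t - r.2)) := i12.sub i3
  unfold moll
  rw [← integral_sub i1 i2, ← integral_sub i12 i3, ← integral_add i123 i4]
  congr 1; ext r
  rw [add_sub_right_comm x s, add_sub_right_comm y t]
  ring

lemma moll_mod (hp : 1 < p) (φ : ContDiffBump (0 : ℝ × ℝ)) (h : MB f) (hl : lpNorm2 p f < ⊤) (u : ℝ) :
    modulus2 p (moll φ f) u ≤ modulus2 p f u := by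
  have hf := loc_int hp h hl
  refine iSup₂_le fun s hs => le_trans ?_ (mod_le s hs)
  have hm := h.dif s.1 s.2
  have hml : lpNorm2 p (fun x y => f (x + s.1) (y + s.2) - f x y) < ⊤ :=
    ((mod_le s hs).trans (mod_le_lp hp h u)).trans_lt
      (ENNReal.mul_lt_top (by simp) hl)
  refine le_trans (le_of_eq ?_) (moll_lp hp φ hm (loc_int hp hm hml))
  congr 1; ext x y
  have i1 := moll_int φ hf (x + s.1) (y + s.2)
  have i4 := moll_int φ hf x y
  unfold moll
  rw [← integral_sub i1 i4]
  congr 1; ext r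
  rw [add_sub_right_comm x, add_sub_right_comm y]
  ring

lemma mix_sub_le (hp : 1 < p) (h : MB f) (h' : MB g) (u v : ℝ) :
    mixedModulus p (fun x y => f x y - g x y) u v ≤ mixedModulus p f u v + mixedModulus p g u v := by
  refine iSup₂_le fun s hs => iSup₂_le fun t ht => ?_
  refine le_trans (le_of_eq ?_) ((lp_sub hp (h.mix s t) (h'.mix s t)).trans
    (add_le_add (mix_le hs ht) (mix_le hs ht)))
  congr 1; ext x y; ring

lemma mod_sub_le (hp : 1 < p) (h : MB f) (h' : MB g) (u : ℝ) :
    modulus2 p (fun x y => f x y - g x y) u ≤ modulus2 p f u + modulus2 p g u := by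
  refine iSup₂_le fun s hs => ?_
  refine le_trans (le_of_eq ?_) ((lp_sub hp (h.dif s.1 s.2) (h'.dif s.1 s.2)).trans
    (add_le_add (mod_le s hs) (mod_le s hs)))
  congr 1; ext x y; ring
end


noncomputable section
variable {p : ℝ} {F f g : ℝ → ℝ → ℝ}

/-- bumps -/
def bmp (n : ℕ) : ContDiffBump (0 : ℝ × ℝ) where
  rIn := 1 / (8 * ((n:ℝ) + 1))
  rOut := 1 / (4 * ((n:ℝ) + 1))
  rIn_pos := by positivity
  rIn_lt_rOut := by
    apply one_div_lt_one_div_of_lt (by positivity)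
    have : (0:ℝ) ≤ n := n.cast_nonneg
    linarith

lemma bmp_out (n : ℕ) : (bmp n).rOut = 1 / (4 * ((n:ℝ) + 1)) := rfl
lemma bmp_in (n : ℕ) : (bmp n).rIn = 1 / (8 * ((n:ℝ) + 1)) := rfl

lemma bmp_tend : Tendsto (fun n => (bmp n).rOut) atTop (nhds 0) := by
  have := (tendsto_one_div_add_atTop_nhds_zero_nat (𝕜 := ℝ)).const_mul (1/4)
  rw [mul_zero] at this
  refine this.congr fun n => ?_
  rw [bmp_out]; field_simp

lemma bmp_anti {n m : ℕ} (h : n ≤ m) : (bmp m).rOut ≤ (bmp n).rOut := by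
  rw [bmp_out, bmp_out]
  have : (n:ℝ) ≤ m := by exact_mod_cast h
  apply one_div_le_one_div_of_le (by positivity); linarith

lemma mod_tend (hp : 1 < p) (hJ : Jp p f < ⊤) :
    Tendsto (fun n => 2 * modulus2 p f (2 * (bmp n).rOut)) atTop (nhds 0) := by
  have h1 : Tendsto (fun n => ENNReal.ofReal (4 * (2 * (bmp n).rOut) ^ (1/p)) * Jp p f) atTop (nhds 0) := by
    have a : Tendsto (fun n => 4 * (2 * (bmp n).rOut) ^ (1/p)) atTop (nhds 0) := by
      have := ((bmp_tend.const_mul 2).rpow_const (p := 1/p) (Or.inr (by positivity))).const_mul 4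
      simpa [Real.zero_rpow (inv_ne_zero (by linarith : p ≠ 0))] using this
    have b := ENNReal.tendsto_ofReal a
    rw [ENNReal.ofReal_zero] at b
    have := ENNReal.Tendsto.mul_const b (b := Jp p f) (Or.inr hJ.ne)
    simpa using this
  have h2 := ENNReal.Tendsto.const_mul (a := 2) h1 (Or.inr (by simp))
  rw [mul_zero] at h2
  refine tendsto_of_tendsto_of_tendsto_of_le_of_le tendsto_const_nhds h2 (fun _ => zero_le) fun n => ?_
  refine mul_le_mul' le_rfl (mod_small hp (by have := (bmp n).rOut_pos; linarith) ?_)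
  rw [bmp_out, mul_one_div, mul_div_assoc', div_le_one (by positivity)]
  have : (0:ℝ) ≤ n := n.cast_nonneg
  linarith

lemma CB.sub (h : CB f) (h' : CB g) : CB (fun x y => f x y - g x y) :=
  ⟨h.cont.sub h'.cont, (h.mb.sub h'.mb).per⟩

lemma cau (hp : 1 < p) (h : MB f) (hl : lpNorm2 p f < ⊤) {N n m : ℕ} (hn : N ≤ n) (hm : N ≤ m) (a b : ℝ) :
    ‖moll (bmp n) f a b - moll (bmp m) f a b‖ₑ ≤ EE p f (2 * modulus2 p f (2 * (bmp N).rOut)) := by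
  have hf := loc_int hp h hl
  have c1 := moll_CB (bmp n) h hf
  have c2 := moll_CB (bmp m) h hf
  refine G_bound hp (c1.sub c2) h (fun u v => ?_) (fun u => ?_) ?_ a b
  · rw [two_mul]
    exact (mix_sub_le hp c1.mb c2.mb u v).trans (add_le_add (moll_mix hp _ h hl u v) (moll_mix hp _ h hl u v))
  · rw [two_mul]
    exact (mod_sub_le hp c1.mb c2.mb u).trans (add_le_add (moll_mod hp _ h hl u) (moll_mod hp _ h hl u))
  · have := lp_sub hp (c1.mb.sub h) (c2.mb.sub h)
    simp only [sub_sub_sub_cancel_right] at this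
    rw [two_mul]
    refine this.trans (add_le_add ?_ ?_)
    · exact (moll_sub_lp hp _ h hf).trans (mod_mono (by have := bmp_anti hn; linarith))
    · exact (moll_sub_lp hp _ h hf).trans (mod_mono (by have := bmp_anti hm; linarith))

lemma exists_lim (hp : 1 < p) (h : MB f) (hl : lpNorm2 p f < ⊤) (hI : Ip p f < ⊤) (hJ : Jp p f < ⊤) :
    ∃ F : ℝ → ℝ → ℝ, CB F ∧ ∀ a b, Tendsto (fun n => moll (bmp n) f a b) atTop (nhds (F a b)) := by
  have hf := loc_int hp h hl
  have hE := EE_tendsto hI hJ _ (mod_tend hp hJ)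
  have key : ∀ ε > (0:ℝ), ∃ N, ∀ n ≥ N, ∀ m ≥ N, ∀ a b,
      |moll (bmp n) f a b - moll (bmp m) f a b| < ε := by
    intro ε hε
    have := hE.eventually (gt_mem_nhds (ENNReal.ofReal_pos.2 hε))
    obtain ⟨N, hN⟩ := this.exists
    refine ⟨N, fun n hn m hm a b => ?_⟩
    have := (cau hp h hl hn hm a b).trans_lt hN
    rw [← ofReal_norm, ENNReal.ofReal_lt_ofReal_iff hε] at this
    exact this
  have hc : ∀ a b, ∃ L, Tendsto (fun n => moll (bmp n) f a b) atTop (nhds L) := fun a b => by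
    refine cauchySeq_tendsto_of_complete (Metric.cauchySeq_iff.2 fun ε hε => ?_)
    obtain ⟨N, hN⟩ := key ε hε
    exact ⟨N, fun n hn m hm => hN n hn m hm a b⟩
  choose F hF using hc
  refine ⟨F, ⟨?_, ?_, ?_⟩, hF⟩
  · have hu : TendstoUniformly (fun n => Function.uncurry (moll (bmp n) f)) (Function.uncurry F) atTop := by
      rw [Metric.tendstoUniformly_iff]
      intro ε hε
      obtain ⟨N, hN⟩ := key (ε/2) (by linarith)
      filter_upwards [eventually_ge_atTop N] with n hn z
      have t := ((hF z.1 z.2).sub_const (moll (bmp n) f z.1 z.2)).abs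
      refine (le_of_tendsto t ?_ : |F z.1 z.2 - moll (bmp n) f z.1 z.2| ≤ ε/2).trans_lt (by linarith)
      filter_upwards [eventually_ge_atTop N] with m hm
      exact (hN m hm n hn _ _).le
    exact hu.continuous (Frequently.of_forall fun n => (moll_CB (bmp n) h hf).cont)
  · intro x y
    refine tendsto_nhds_unique (hF (x+1) y) ((hF x y).congr fun n => ?_)
    rw [(moll_CB (bmp n) h hf).per.1]
  · intro x y
    refine tendsto_nhds_unique (hF x (y+1)) ((hF x y).congr fun n => ?_)
    rw [(moll_CB (bmp n) h hf).per.2]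

lemma lp_congr (hp : 1 < p) (hf : Measurable (Function.uncurry f)) (hg : Measurable (Function.uncurry g))
    (he : ∀ᵐ z : ℝ × ℝ, f z.1 z.2 = g z.1 z.2) : lpNorm2 p f = lpNorm2 p g := by
  rw [lp_eq hp hf, lp_eq hp hg]
  refine eLpNorm_congr_ae ?_
  have : lam.prod lam ≪ (volume : Measure (ℝ × ℝ)) := by
    rw [Measure.prod_restrict, ← Measure.volume_eq_prod]
    exact Measure.restrict_le_self.absolutelyContinuous
  exact this.ae_le he

lemma ae_sh (he : ∀ᵐ z : ℝ × ℝ, f z.1 z.2 = g z.1 z.2) (s t : ℝ) :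
    ∀ᵐ z : ℝ × ℝ, f (z.1 + s) (z.2 + t) = g (z.1 + s) (z.2 + t) :=
  (measurePreserving_add_right (volume : Measure (ℝ × ℝ)) (s, t)).quasiMeasurePreserving.ae he

lemma mix_congr (hp : 1 < p) (h : MB f) (h' : MB g)
    (he : ∀ᵐ z : ℝ × ℝ, f z.1 z.2 = g z.1 z.2) : mixedModulus p f = mixedModulus p g := by
  ext u v
  unfold mixedModulus
  refine iSup_congr fun s => iSup_congr fun _ => iSup_congr fun t => iSup_congr fun _ => ?_
  refine lp_congr hp (h.mix s t).meas (h'.mix s t).meas ?_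
  have a1 := ae_sh he s t
  have a2 := ae_sh he s 0
  have a3 := ae_sh he 0 t
  simp only [add_zero] at a2 a3
  filter_upwards [he, a1, a2, a3] with z b1 b2 b3 b4
  rw [b1, b2, b3, b4]

lemma mod_congr (hp : 1 < p) (h : MB f) (h' : MB g)
    (he : ∀ᵐ z : ℝ × ℝ, f z.1 z.2 = g z.1 z.2) : modulus2 p f = modulus2 p g := by
  ext u
  unfold modulus2
  refine iSup_congr fun s => iSup_congr fun _ => ?_
  refine lp_congr hp (h.dif s.1 s.2).meas (h'.dif s.1 s.2).meas ?_
  filter_upwards [he, ae_sh he s.1 s.2] with z b1 b2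
  rw [b1, b2]

lemma final (hp : 1 < p) (h : MB f) (hl : lpNorm2 p f < ⊤) (hI : Ip p f < ⊤) (hJ : Jp p f < ⊤) :
    ∃ F : ℝ → ℝ → ℝ, CB F ∧ MemVpVp p F ∧ (∀ᵐ z : ℝ × ℝ, f z.1 z.2 = F z.1 z.2) ∧
      Wp p F ≤ 2 * VB p f := by
  obtain ⟨F, hF, hlim⟩ := exists_lim hp h hl hI hJ
  have he : ∀ᵐ z : ℝ × ℝ, f z.1 z.2 = F z.1 z.2 := by
    have := ContDiffBump.ae_convolution_tendsto_right_of_locallyIntegrable (φ := bmp) (l := atTop) (K := 2)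
      (μ := (volume : Measure (ℝ × ℝ))) bmp_tend
      (Eventually.of_forall fun n => by
        rw [bmp_out, bmp_in]; apply le_of_eq; field_simp; norm_num) (loc_int hp h hl)
    filter_upwards [this] with z hz
    exact tendsto_nhds_unique hz (hlim z.1 z.2)
  have e1 := mix_congr hp h hF.mb he
  have e2 := mod_congr hp h hF.mb he
  have eV : VB p F = VB p f := by unfold VB Kp Ip; rw [e1]
  have eB : B1 p F = B1 p f := by unfold B1 Jp; rw [e2]
  have := concl hp hF (by rw [eV]; exact VB_lt hp h hl hI hJ) (by rw [eB]; exact B1_lt hp h hl hJ)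
  rw [eV] at this
  exact ⟨F, hF, this.1, he, this.2⟩
end

/-- If `1 < p < ∞`, `f ∈ L^p([0,1]²)`, `I_p(f) < ∞` and `J_p(f) < ∞`,
then `f` agrees a.e. with a continuous `f̄ ∈ V_p[V_p]` and
`W_p(f̄) ≤ A [ω(f;1,1)_p + (1/(pp')) K_p(f) + (1/(pp'))² I_p(f)]` for an absolute
constant `A`. -/
theorem statement19 :
    ∃ A : ℝ, 0 < A ∧
      ∀ (p : ℝ), 1 < p → ∀ f : ℝ → ℝ → ℝ,
        MemLp2 p f → Ip p f < ⊤ → Jp p f < ⊤ →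
          ∃ fbar : ℝ → ℝ → ℝ,
            Continuous (Function.uncurry fbar) ∧ BiPeriodic fbar ∧ MemVpVp p fbar ∧
            (∀ᵐ z : ℝ × ℝ ∂volume, f z.1 z.2 = fbar z.1 z.2) ∧
            Wp p fbar ≤ ENNReal.ofReal A *
              (mixedModulus p f 1 1
                + ENNReal.ofReal (1 / (p * (p / (p - 1)))) * Kp p f
                + ENNReal.ofReal ((1 / (p * (p / (p - 1)))) ^ 2) * Ip p f) := by
  refine ⟨2 * 384 ^ 2, by norm_num, fun p hp f hf hI hJ => ?_⟩
  obtain ⟨F, hF, hm, he, hW⟩ := final hp ⟨hf.1, hf.2.1⟩ hf.2.2 hI hJ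
  refine ⟨F, hF.cont, hF.per, hm, he, hW.trans (le_of_eq ?_)⟩
  have h0 : 0 ≤ 1 / (p * (p / (p - 1))) := by
    have : 0 < p - 1 := by linarith
    have : 0 < p := by linarith
    positivity
  rw [ENNReal.ofReal_pow h0, VB, ← mul_assoc]
  congr 1
  rw [ENNReal.ofReal_mul (by norm_num), ENNReal.ofReal_pow (by norm_num), ENNReal.ofReal_ofNat,
    ENNReal.ofReal_ofNat]
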